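/- arXiv:1807.00497 — 2 statements merged into one kernel-verified Lean document; each statement's English description precedes it below -/
import Mathlib

section
/- Let ε,b > 0 and let c:(−ε,b) → ℝ^{n+2} be smooth with ⟨c(t),c(t)⟩ = 0, c(t) ≠ 0 and ⟨c′(t),c′(t)⟩ > 0 for all t. Let λ ∈ ℝ∖{0} and let ĉ:(0,b) → ℝ^{n+2} be differentiable with ĉ(t) ≠ 0 and ⟨ĉ(t),ĉ(t)⟩ = 0 for all t, satisfying ĉ′(t) = (λ/t)·(⟨c(t),ĉ(t)⟩c′(t) − ⟨c′(t),ĉ(t)⟩c(t)) for all t ∈ (0,b). Then there exist nonzero reals r(t) such that r(t)·ĉ(t) → c(0) as t → 0⁺; that is, the λ-Darboux transform converges projectively to the point ⟨c(0)⟩. -/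
open scoped BigOperators Topology
open Filter Set MeasureTheory

noncomputable section

abbrev E (n : ℕ) := EuclideanSpace ℝ (Fin (n + 2))

/-- Minkowski inner product of signature (n+1,1). -/
def mink {n : ℕ} (x y : E n) : ℝ :=
  ∑ i, (if i = Fin.last (n + 1) then (-1 : ℝ) else 1) * x i * y i

variable {n : ℕ}

lemma mink_comm (x y : E n) : mink x y = mink y x :=
  Finset.sum_congr rfl fun i _ => by ring

lemma mink_add_right (v x y : E n) : mink v (x + y) = mink v x + mink v y := by
  simp [mink, mul_add, Finset.sum_add_distrib]

lemma mink_smul_right (v : E n) (c : ℝ) (x : E n) : mink v (c • x) = c * mink v x := by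
  unfold mink
  rw [Finset.mul_sum]
  refine Finset.sum_congr rfl fun i _ => ?_
  simp only [PiLp.smul_apply, smul_eq_mul]
  ring

lemma mink_add_left (x y v : E n) : mink (x + y) v = mink x v + mink y v := by
  rw [mink_comm, mink_add_right, mink_comm v x, mink_comm v y]

lemma mink_smul_left (c : ℝ) (x v : E n) : mink (c • x) v = c * mink x v := by
  rw [mink_comm, mink_smul_right, mink_comm v x]

/-- `v ∧ w` as an endomorphism: `x ↦ ⟨v,x⟩ w − ⟨w,x⟩ v`. -/
def wedge {n : ℕ} (v w : E n) : E n →L[ℝ] E n :=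
  LinearMap.toContinuousLinearMap
    { toFun := fun x => mink v x • w - mink w x • v
      map_add' := by
        intro x y
        simp only [mink_add_right, add_smul]
        abel
      map_smul' := by
        intro c x
        simp only [mink_smul_right, RingHom.id_apply, mul_smul, smul_sub] }

/-- rank one endomorphism `vw* : x ↦ ⟨x,w⟩ v`. -/
def rankOne {n : ℕ} (v w : E n) : E n →L[ℝ] E n :=
  LinearMap.toContinuousLinearMap
    { toFun := fun x => mink x w • v
      map_add' := by
        intro x y
        simp only [mink_add_left, add_smul]
      map_smul' := by
        intro c x
        simp only [mink_smul_left, RingHom.id_apply, mul_smul] }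

/-!
Write `p = c(0)`. The equation for `ĉ` is the Fuchsian system `t ĉ' = B(t) ĉ` with
`B(t) = c(t) ∧ λ c'(t)`, whose residue `A = B(0)` satisfies `A ^ 3 = 0` because `p` is null and
orthogonal to `c'(0)`. Hence `exp (± log t • A)` is polynomial in `log t`, and the gauge transform
`v = exp (-log t • A) ĉ` solves a linear equation with integrable coefficient. By Gronwall `v` has
a nonzero limit `v₀`, and `v₀` is null because `A` is skew. Moreover `ĉ - exp (log t • A) v₀ → 0`,
and `exp (log t • A) v₀` is quadratic in `log t` with leading coefficient a nonzero multiple of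
`⟨p, v₀⟩ p`. If `⟨p, v₀⟩ ≠ 0` this term dominates; otherwise the null vectors `p` and `v₀` are
orthogonal, hence proportional, and `exp (log t • A)` fixes `v₀`.
-/

open Asymptotics NormedSpace
open scoped NNReal

theorem exists_isBigO_sub_of_lipschitzOnWith_Ioo {F : Type*} [SeminormedAddCommGroup F]
    [CompleteSpace F] {w : ℝ → F} {L : ℝ≥0} {a b : ℝ} (hab : a < b)
    (hL : LipschitzOnWith L w (Ioo a b)) :
    ∃ w₀, (fun s => w s - w₀) =O[𝓝[>] a] fun s => s - a := by
  have hmem : Ioo a b ∈ 𝓝[>] a := Ioo_mem_nhdsGT hab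
  have hcauchy : Cauchy (map w (𝓝[>] a)) :=
    (cauchy_nhds.mono nhdsWithin_le_nhds).map_of_le hL.uniformContinuousOn (le_principal_iff.2 hmem)
  obtain ⟨w₀, hw₀ : Tendsto w (𝓝[>] a) (𝓝 w₀)⟩ := CompleteSpace.complete hcauchy
  refine ⟨w₀, IsBigO.of_bound L ?_⟩
  filter_upwards [hmem] with s hs
  refine le_of_tendsto_of_tendsto (tendsto_const_nhds.sub hw₀).norm
    (((tendsto_const_nhds.sub tendsto_id).mono_left nhdsWithin_le_nhds).norm.const_mul (L : ℝ)) ?_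
  filter_upwards [hmem] with u hu using hL.norm_sub_le hs hu

section Gronwall

variable {F : Type*} [NormedAddCommGroup F] [NormedSpace ℝ F] {w w' : ℝ → F}

theorem norm_right_le_norm_left_mul_exp {K a b : ℝ} (hab : a ≤ b)
    (hw : ∀ s ∈ Icc a b, HasDerivAt w (w' s) s) (hw' : ∀ s ∈ Icc a b, ‖w' s‖ ≤ K * ‖w s‖) :
    ‖w b‖ ≤ ‖w a‖ * Real.exp (K * (b - a)) := by
  rw [← gronwallBound_ε0]
  exact norm_le_gronwallBound_of_norm_deriv_right_le
    (fun s hs => (hw s hs).continuousAt.continuousWithinAt)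
    (fun s hs => (hw s (Ico_subset_Icc_self hs)).hasDerivWithinAt) le_rfl
    (fun s hs => by simpa only [add_zero] using hw' s (Ico_subset_Icc_self hs)) b
    (right_mem_Icc.2 hab)

theorem norm_left_le_norm_right_mul_exp {K a b : ℝ} (hab : a ≤ b)
    (hw : ∀ s ∈ Icc a b, HasDerivAt w (w' s) s) (hw' : ∀ s ∈ Icc a b, ‖w' s‖ ≤ K * ‖w s‖) :
    ‖w a‖ ≤ ‖w b‖ * Real.exp (K * (b - a)) := by
  have hmem : ∀ s ∈ Icc (-b) (-a), -s ∈ Icc a b := fun s hs => neg_mem_Icc_iff.2 hs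
  have hreflect := norm_right_le_norm_left_mul_exp (w := fun s => w (-s)) (w' := fun s => -w' (-s))
    (K := K) (neg_le_neg hab)
    (fun s hs => by simpa using! (hw (-s) (hmem s hs)).scomp s (hasDerivAt_neg s))
    (fun s hs => by simpa only [norm_neg] using hw' (-s) (hmem s hs))
  simpa only [neg_neg, neg_sub_neg] using hreflect

theorem norm_le_norm_mul_exp_abs_sub {K : ℝ} {S : Set ℝ} [hS : S.OrdConnected]
    (hw : ∀ s ∈ S, HasDerivAt w (w' s) s) (hw' : ∀ s ∈ S, ‖w' s‖ ≤ K * ‖w s‖)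
    {s u : ℝ} (hs : s ∈ S) (hu : u ∈ S) : ‖w u‖ ≤ ‖w s‖ * Real.exp (K * |u - s|) := by
  rcases le_total s u with hsu | hus
  · rw [abs_of_nonneg (sub_nonneg.2 hsu)]
    exact norm_right_le_norm_left_mul_exp hsu (fun x hx => hw x (hS.out hs hu hx))
      (fun x hx => hw' x (hS.out hs hu hx))
  · rw [abs_sub_comm, abs_of_nonneg (sub_nonneg.2 hus)]
    exact norm_left_le_norm_right_mul_exp hus (fun x hx => hw x (hS.out hu hs hx))
      (fun x hx => hw' x (hS.out hu hs hx))

theorem exists_lipschitzOnWith_of_norm_deriv_le {K : ℝ≥0} {S : Set ℝ} [hS : S.OrdConnected]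
    (hbdd : Bornology.IsBounded S) (hw : ∀ s ∈ S, HasDerivAt w (w' s) s)
    (hw' : ∀ s ∈ S, ‖w' s‖ ≤ K * ‖w s‖) : ∃ L, LipschitzOnWith L w S := by
  rcases S.eq_empty_or_nonempty with rfl | ⟨s₀, hs₀⟩
  · exact ⟨0, lipschitzOnWith_empty 0 w⟩
  refine ⟨K * (‖w s₀‖₊ * ⟨Real.exp (K * Metric.diam S), (Real.exp_pos _).le⟩),
    hS.convex.lipschitzOnWith_of_nnnorm_hasDerivWithin_le
      (fun s hs => (hw s hs).hasDerivWithinAt) fun s hs => ?_⟩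
  have hdiam : |s - s₀| ≤ Metric.diam S := Metric.dist_le_diam_of_mem hbdd hs hs₀
  calc ‖w' s‖ ≤ K * ‖w s‖ := hw' s hs
    _ ≤ K * (‖w s₀‖ * Real.exp (K * |s - s₀|)) := by
      gcongr
      exact norm_le_norm_mul_exp_abs_sub hw hw' hs₀ hs
    _ ≤ K * (‖w s₀‖ * Real.exp (K * Metric.diam S)) := by gcongr

theorem exists_ne_zero_isBigO_sub_of_deriv_isBigO [CompleteSpace F] {a : ℝ}
    (hw : ∀ᶠ s in 𝓝[>] a, HasDerivAt w (w' s) s) (hw' : w' =O[𝓝[>] a] w)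
    (hne : ∃ᶠ s in 𝓝[>] a, w s ≠ 0) :
    ∃ w₀ ≠ 0, (fun s => w s - w₀) =O[𝓝[>] a] fun s => s - a := by
  obtain ⟨K, hK, hbound⟩ := hw'.exists_nonneg
  lift K to ℝ≥0 using hK
  obtain ⟨b, hab : a < b, hsub⟩ := mem_nhdsGT_iff_exists_Ioo_subset.1 (hw.and hbound.bound)
  have hderiv : ∀ s ∈ Ioo a b, HasDerivAt w (w' s) s := fun s hs => (hsub hs).1
  have hnorm : ∀ s ∈ Ioo a b, ‖w' s‖ ≤ K * ‖w s‖ := fun s hs => (hsub hs).2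
  obtain ⟨L, hL⟩ := exists_lipschitzOnWith_of_norm_deriv_le (Metric.isBounded_Ioo a b) hderiv hnorm
  obtain ⟨w₀, hw₀⟩ := exists_isBigO_sub_of_lipschitzOnWith_Ioo hab hL
  refine ⟨w₀, ?_, hw₀⟩
  rintro rfl
  obtain ⟨s, hs, hsab⟩ := (hne.and_eventually (Ioo_mem_nhdsGT hab)).exists
  have hsub0 : Tendsto (fun u => u - a) (𝓝[>] a) (𝓝 0) :=
    tendsto_sub_nhds_zero_iff.2 nhdsWithin_le_nhds
  have hlim : Tendsto (fun u => ‖w u‖ * Real.exp (K * |s - u|)) (𝓝[>] a) (𝓝 0) := by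
    have hexp : Tendsto (fun u => Real.exp (K * |s - u|)) (𝓝[>] a) (𝓝 (Real.exp (K * |s - a|))) :=
      (by fun_prop : Continuous fun u => Real.exp (K * |s - u|)).continuousWithinAt
    simpa using (hw₀.trans_tendsto hsub0).norm.mul hexp
  refine hs (norm_le_zero_iff.1 (ge_of_tendsto hlim ?_))
  filter_upwards [Ioo_mem_nhdsGT hab] with u hu
  exact norm_le_norm_mul_exp_abs_sub hderiv hnorm hu hsab

theorem tendsto_rpow_nhdsGT_nhdsGT_zero {α : ℝ} (hα : 0 < α) :
    Tendsto (fun t : ℝ => t ^ α) (𝓝[>] 0) (𝓝[>] 0) := by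
  refine tendsto_nhdsWithin_iff.2 ⟨?_, ?_⟩
  · simpa only [Real.zero_rpow hα.ne'] using
      (Real.continuousAt_rpow_const 0 α (.inr hα.le)).tendsto.mono_left nhdsWithin_le_nhds
  · filter_upwards [self_mem_nhdsWithin] with t ht using Real.rpow_pos_of_pos ht α

-- Substituting `t = s ^ (1 / α)` turns the integrable singularity into a bounded coefficient.
theorem exists_ne_zero_isBigO_sub_of_deriv_isBigO_rpow_smul [CompleteSpace F] {v v' : ℝ → F}
    {α : ℝ} (hα : 0 < α) (hv : ∀ᶠ t in 𝓝[>] 0, HasDerivAt v (v' t) t)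
    (hv' : v' =O[𝓝[>] 0] fun t => t ^ (α - 1) • v t) (hne : ∃ᶠ t in 𝓝[>] 0, v t ≠ 0) :
    ∃ v₀ ≠ 0, (fun t => v t - v₀) =O[𝓝[>] 0] fun t => t ^ α := by
  have hpow := tendsto_rpow_nhdsGT_nhdsGT_zero (inv_pos.2 hα)
  set w : ℝ → F := fun s => v (s ^ α⁻¹) with hw
  have hwv : ∀ᶠ t in 𝓝[>] 0, w (t ^ α) = v t := by
    filter_upwards [self_mem_nhdsWithin] with t (ht : 0 < t)
    simp only [hw, Real.rpow_rpow_inv ht.le hα.ne']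
  have hwne : ∃ᶠ s in 𝓝[>] 0, w s ≠ 0 :=
    (tendsto_rpow_nhdsGT_nhdsGT_zero hα).frequently
      ((hne.and_eventually hwv).mono fun t ht => ht.2 ▸ ht.1)
  have hderiv : ∀ᶠ s in 𝓝[>] 0,
      HasDerivAt w ((α⁻¹ * s ^ (α⁻¹ - 1)) • v' (s ^ α⁻¹)) s := by
    filter_upwards [hpow.eventually hv, self_mem_nhdsWithin] with s hs (hs0 : 0 < s)
    exact hs.scomp s (Real.hasDerivAt_rpow_const (.inl hs0.ne'))
  have hbound : (fun s => (α⁻¹ * s ^ (α⁻¹ - 1)) • v' (s ^ α⁻¹)) =O[𝓝[>] 0] w := by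
    refine (((isBigO_refl (fun s : ℝ => α⁻¹ * s ^ (α⁻¹ - 1)) _).smul
      (hv'.comp_tendsto hpow)).congr' .rfl ?_).trans ((isBigO_refl w _).const_smul_left α⁻¹)
    filter_upwards [self_mem_nhdsWithin] with s (hs : 0 < s)
    have hcancel : s ^ (α⁻¹ - 1) * (s ^ α⁻¹) ^ (α - 1) = 1 := by
      rw [← Real.rpow_mul hs.le, ← Real.rpow_add hs,
        show α⁻¹ - 1 + α⁻¹ * (α - 1) = 0 by field_simp; ring, Real.rpow_zero]
    simp only [Function.comp_apply, smul_smul, mul_assoc, hcancel, mul_one]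
    rfl
  obtain ⟨v₀, hv₀, hlim⟩ := exists_ne_zero_isBigO_sub_of_deriv_isBigO hderiv hbound hwne
  refine ⟨v₀, hv₀, (hlim.comp_tendsto (tendsto_rpow_nhdsGT_nhdsGT_zero hα)).congr' ?_ ?_⟩
  · filter_upwards [hwv] with t ht using by simp only [Function.comp_apply, ht]
  · exact .of_eq (by simp [Function.comp_def])

end Gronwall

section FuchsianSystem

theorem isBigO_clm_apply {ι V W G : Type*} [NormedAddCommGroup V] [NormedSpace ℝ V]
    [NormedAddCommGroup W] [NormedSpace ℝ W] [NormedAddCommGroup G] [NormedSpace ℝ G]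
    {l : Filter ι} {T : ι → V →L[ℝ] W} {g : ι → ℝ} {y : ι → V} {z : ι → G}
    (hT : T =O[l] g) (hy : y =O[l] z) : (fun i => T i (y i)) =O[l] fun i => g i • z i := by
  have hle : (fun i => T i (y i)) =O[l] fun i => ‖T i‖ * ‖y i‖ :=
    .of_norm_le fun i => (T i).le_opNorm (y i)
  have hsmul : (fun i => ‖g i‖ * ‖z i‖) =O[l] fun i => g i • z i :=
    isBigO_of_le l fun i => by rw [norm_smul, norm_mul, norm_norm, norm_norm]
  exact (hle.trans (hT.norm_norm.mul hy.norm_norm)).trans hsmul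

theorem exp_eq_sum_range_of_pow_eq_zero {𝔸 : Type*} [Ring 𝔸] [Algebra ℝ 𝔸] [TopologicalSpace 𝔸]
    [IsTopologicalRing 𝔸] {A : 𝔸} {N : ℕ} (hA : A ^ N = 0) :
    exp A = ∑ k ∈ Finset.range N, (k.factorial⁻¹ : ℝ) • A ^ k := by
  rw [exp_eq_tsum ℝ]
  refine tsum_eq_sum fun k hk => ?_
  rw [pow_eq_zero_of_le (not_lt.1 fun hkN => hk (Finset.mem_range.2 hkN)) hA, smul_zero]

theorem isBigO_exp_log_smul_of_isNilpotent {𝔸 : Type*} [NormedRing 𝔸] [NormedAlgebra ℝ 𝔸] {A : 𝔸}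
    (hA : IsNilpotent A) {γ : ℝ} (hγ : 0 < γ) :
    (fun t => exp (Real.log t • A)) =O[𝓝[>] 0] fun t => t ^ (-γ) := by
  obtain ⟨N, hN⟩ := hA
  have hpow : ∀ t, (Real.log t • A) ^ N = 0 := fun t => by rw [smul_pow, hN, smul_zero]
  simp only [fun t => exp_eq_sum_range_of_pow_eq_zero (hpow t), smul_pow]
  refine IsBigO.fun_sum fun k _ => IsBigO.const_smul_left (c := (k.factorial⁻¹ : ℝ)) ?_
  have hlog : (fun t => Real.log t ^ k) =O[𝓝[>] 0] fun t => t ^ (-γ) :=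
    isBigO_norm_left.1 <|
      (isLittleO_abs_log_rpow_rpow_nhdsGT_zero k (neg_neg_of_pos hγ)).isBigO.congr_left
        fun t => by rw [Real.rpow_natCast, norm_pow, Real.norm_eq_abs]
  simpa using hlog.smul (isBigO_const_const (A ^ k) (one_ne_zero (α := ℝ)) _)

theorem exp_mul_exp_neg {𝔸 : Type*} [NormedRing 𝔸] [NormedAlgebra ℝ 𝔸] [CompleteSpace 𝔸] (A : 𝔸) :
    exp A * exp (-A) = 1 := by
  let _ : NormedAlgebra ℚ 𝔸 := .restrictScalars ℚ ℝ 𝔸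
  rw [← exp_add_of_commute (Commute.refl A).neg_right, add_neg_cancel, exp_zero]

variable {F : Type*} [NormedAddCommGroup F] [NormedSpace ℝ F] [CompleteSpace F]

theorem exp_apply_exp_neg_apply (A : F →L[ℝ] F) (x : F) : exp A (exp (-A) x) = x :=
  DFunLike.congr_fun (exp_mul_exp_neg A) x

theorem hasDerivAt_exp_neg_log_smul_apply (A B : F →L[ℝ] F) {x : ℝ → F} {t : ℝ} (ht : t ≠ 0)
    (hx : HasDerivAt x (t⁻¹ • B (x t)) t) :
    HasDerivAt (fun s => exp (-(Real.log s • A)) (x s))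
      (t⁻¹ • exp (-(Real.log t • A)) ((B - A) (x t))) t := by
  have hexp : HasDerivAt (fun s => exp (-(Real.log s • A)))
      (-t⁻¹ • (exp (-(Real.log t • A)) * A)) t := by
    simpa only [Function.comp_def, Pi.neg_apply, neg_smul] using
      (hasDerivAt_exp_smul_const (𝕂 := ℝ) A (-Real.log t)).scomp t (Real.hasDerivAt_log ht).neg
  refine (hexp.clm_apply hx).congr_deriv ?_
  simp only [smul_apply, sub_apply, mul_apply_eq_comp, map_sub, map_smul]
  module

theorem isBigO_exp_neg_log_smul_apply_sub_apply {A : F →L[ℝ] F} (hA : IsNilpotent A)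
    {B : ℝ → F →L[ℝ] F} {α : ℝ} (hα : 0 < α)
    (hB : (fun t => B t - A) =O[𝓝[>] 0] fun t => t ^ α) (x : ℝ → F) :
    (fun t => t⁻¹ • exp (-(Real.log t • A)) ((B t - A) (x t)))
      =O[𝓝[>] 0] fun t => t ^ (α / 2 - 1) • exp (-(Real.log t • A)) (x t) := by
  have hexp := isBigO_exp_log_smul_of_isNilpotent hA (γ := α / 4) (by positivity)
  have hexpneg : (fun t => exp (-(Real.log t • A))) =O[𝓝[>] 0] fun t => t ^ (-(α / 4)) := by
    simpa only [smul_neg] using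
      isBigO_exp_log_smul_of_isNilpotent hA.neg (γ := α / 4) (by positivity)
  have happly := isBigO_clm_apply hexpneg (isBigO_clm_apply hB (isBigO_clm_apply hexp
    (isBigO_refl (fun t => exp (-(Real.log t • A)) (x t)) (𝓝[>] 0))))
  simp only [exp_apply_exp_neg_apply] at happly
  refine ((isBigO_refl (fun t : ℝ => t⁻¹) (𝓝[>] 0)).smul happly).congr' .rfl ?_
  filter_upwards [self_mem_nhdsWithin] with t (ht : 0 < t)
  simp only [smul_smul, ← Real.rpow_neg_one, ← Real.rpow_add ht]
  congr 2
  ring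

theorem exists_tendsto_sub_exp_log_smul_apply {A : F →L[ℝ] F} (hA : IsNilpotent A)
    {B : ℝ → F →L[ℝ] F} {α : ℝ} (hα : 0 < α)
    (hB : (fun t => B t - A) =O[𝓝[>] 0] fun t => t ^ α) {x : ℝ → F}
    (hx : ∀ᶠ t in 𝓝[>] 0, HasDerivAt x (t⁻¹ • B t (x t)) t) (hne : ∃ᶠ t in 𝓝[>] 0, x t ≠ 0) :
    ∃ x₀ ≠ 0, Tendsto (fun t => exp (-(Real.log t • A)) (x t)) (𝓝[>] 0) (𝓝 x₀) ∧
      Tendsto (fun t => x t - exp (Real.log t • A) x₀) (𝓝[>] 0) (𝓝 0) := by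
  have hpos : ∀ᶠ t : ℝ in 𝓝[>] 0, 0 < t := self_mem_nhdsWithin
  have hexp := isBigO_exp_log_smul_of_isNilpotent hA (γ := α / 4) (by positivity)
  set v : ℝ → F := fun t => exp (-(Real.log t • A)) (x t)
  have hxv : ∀ t, x t = exp (Real.log t • A) (v t) := fun t => (exp_apply_exp_neg_apply _ _).symm
  have hderiv : ∀ᶠ t in 𝓝[>] 0,
      HasDerivAt v (t⁻¹ • exp (-(Real.log t • A)) ((B t - A) (x t))) t := by
    filter_upwards [hx, hpos] with t hxt ht
    exact hasDerivAt_exp_neg_log_smul_apply A (B t) ht.ne' hxt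
  have hvne : ∃ᶠ t in 𝓝[>] 0, v t ≠ 0 :=
    hne.mono fun t ht hvt => ht (by rw [hxv, hvt, map_zero])
  obtain ⟨x₀, hx₀, hlim⟩ :=
    exists_ne_zero_isBigO_sub_of_deriv_isBigO_rpow_smul (half_pos hα) hderiv
      (isBigO_exp_neg_log_smul_apply_sub_apply hA hα hB x) hvne
  have hrpow {β : ℝ} (hβ : 0 < β) : Tendsto (fun t : ℝ => t ^ β) (𝓝[>] 0) (𝓝 0) :=
    (tendsto_rpow_nhdsGT_nhdsGT_zero hβ).mono_right nhdsWithin_le_nhds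
  refine ⟨x₀, hx₀, tendsto_sub_nhds_zero_iff.1 (hlim.trans_tendsto (hrpow (half_pos hα))), ?_⟩
  have hasymp : (fun t => x t - exp (Real.log t • A) x₀) =O[𝓝[>] 0] fun t => t ^ (α / 4) := by
    simp only [fun t => congrArg (· - exp (Real.log t • A) x₀) (hxv t), ← map_sub]
    refine (isBigO_clm_apply hexp hlim).congr' .rfl ?_
    filter_upwards [hpos] with t ht
    rw [smul_eq_mul, ← Real.rpow_add ht]
    congr 1
    ring
  exact hasymp.trans_tendsto (hrpow (by positivity))

end FuchsianSystem

section FormWedge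

variable {V : Type*} [NormedAddCommGroup V] [NormedSpace ℝ V] (β : V →L[ℝ] V →L[ℝ] ℝ)

/-- The endomorphism `v ∧ w` of the bilinear form `β`, `x ↦ β v x • w - β w x • v`; it
generalizes `wedge`, and the coefficient of the differential equation for `ĉ` is of this form. -/
def formWedge (v w : V) : V →L[ℝ] V := (β v).smulRight w - (β w).smulRight v

variable {β}

theorem formWedge_apply (v w x : V) : formWedge β v w x = β v x • w - β w x • v := rfl

theorem formWedge_sub_formWedge (v w p q : V) :
    formWedge β v w - formWedge β p q = formWedge β (v - p) w + formWedge β p (w - q) := by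
  ext x
  simp only [formWedge_apply, sub_apply, add_apply, map_sub]
  module

theorem norm_formWedge_le (v w : V) : ‖formWedge β v w‖ ≤ 2 * ‖β‖ * (‖v‖ * ‖w‖) := by
  have hv : ‖(β v).smulRight w‖ ≤ ‖β‖ * (‖v‖ * ‖w‖) := by
    rw [ContinuousLinearMap.norm_smulRight_apply, ← mul_assoc]
    gcongr
    exact β.le_opNorm v
  have hw : ‖(β w).smulRight v‖ ≤ ‖β‖ * (‖v‖ * ‖w‖) := by
    rw [ContinuousLinearMap.norm_smulRight_apply, mul_comm ‖v‖, ← mul_assoc]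
    gcongr
    exact β.le_opNorm w
  exact (norm_sub_le _ _).trans (by linarith)

theorem isBigO_formWedge {ι : Type*} {l : Filter ι} {f g : ι → V} {φ ψ : ι → ℝ} (hf : f =O[l] φ)
    (hg : g =O[l] ψ) : (fun i => formWedge β (f i) (g i)) =O[l] fun i => φ i * ψ i :=
  have hle : (fun i => formWedge β (f i) (g i)) =O[l] fun i => ‖f i‖ * ‖g i‖ :=
    .of_bound (2 * ‖β‖) (.of_forall fun i => by
      simpa only [norm_mul, norm_norm] using norm_formWedge_le (f i) (g i))
  hle.trans (hf.norm_left.mul hg.norm_left)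

theorem isBigO_formWedge_sub_formWedge {ι : Type*} {l : Filter ι} {f g : ι → V} {p q : V}
    {φ : ι → ℝ} (hφ : φ =O[l] fun _ => (1 : ℝ)) (hfp : (fun i => f i - p) =O[l] φ)
    (hgq : (fun i => g i - q) =O[l] φ) :
    (fun i => formWedge β (f i) (g i) - formWedge β p q) =O[l] φ := by
  simp only [formWedge_sub_formWedge]
  have hg : g =O[l] fun _ => (1 : ℝ) := by
    simpa using (hgq.trans hφ).add (isBigO_const_const q (one_ne_zero (α := ℝ)) l)
  have hleft := isBigO_formWedge (β := β) hfp hg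
  have hright := isBigO_formWedge (β := β) (isBigO_const_const p (one_ne_zero (α := ℝ)) l) hgq
  simp only [mul_one, one_mul] at hleft hright
  exact hleft.add hright

theorem isBigO_formWedge_smul_sub {c c' : ℝ → V} {α : ℝ} (hα : 0 < α) (k : ℝ)
    (hc : HasDerivWithinAt c (c' 0) (Ici 0) 0)
    (hc' : (fun t => c' t - c' 0) =O[𝓝[>] 0] fun t => t ^ α) :
    (fun t => formWedge β (c t) (k • c' t) - formWedge β (c 0) (k • c' 0))
      =O[𝓝[>] 0] fun t => t ^ min α 1 := by
  have hpos : 0 < min α 1 := lt_min hα one_pos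
  have hIoi : 𝓝[>] (0 : ℝ) ≤ 𝓝[≥] 0 := nhdsWithin_mono 0 Ioi_subset_Ici_self
  have hlip : (fun t => c t - c 0) =O[𝓝[>] 0] fun t => t ^ min α 1 := by
    refine .trans ?_ ((IsBigO.id_rpow_of_le_one (min_le_right α 1)).mono hIoi)
    exact (hc.differentiableWithinAt.isBigO_sub.mono hIoi).congr_right sub_zero
  have hrpow : (fun t => t ^ α) =O[𝓝[>] 0] fun t : ℝ => t ^ min α 1 :=
    (IsBigO.rpow_rpow_nhdsGE_zero_of_le (min_le_left α 1) hα.ne').mono hIoi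
  refine isBigO_formWedge_sub_formWedge ?_ hlip ?_
  · exact ((tendsto_rpow_nhdsGT_nhdsGT_zero hpos).mono_right nhdsWithin_le_nhds).isBigO_one ℝ
  · simp only [← smul_sub]
    exact (hc'.trans hrpow).const_smul_left k

theorem apply_formWedge_apply (hβ : ∀ x y, β x y = β y x) (v w x y : V) :
    β (formWedge β v w x) y = -β x (formWedge β v w y) := by
  simp only [formWedge_apply, map_sub, map_smul, sub_apply, smul_apply, smul_eq_mul, hβ x]
  ring

theorem apply_exp_apply_exp [CompleteSpace V] {A : V →L[ℝ] V}
    (hA : ∀ x y, β (A x) y = -β x (A y)) (x y : V) : β (exp A x) (exp A y) = β x y := by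
  have hexp (z : V) (s : ℝ) : HasDerivAt (fun s => exp (s • A) z) (A (exp (s • A) z)) s := by
    simpa using (hasDerivAt_exp_smul_const' (𝕂 := ℝ) A s).clm_apply (hasDerivAt_const s z)
  have hderiv (s : ℝ) : HasDerivAt (fun s => β (exp (s • A) x) (exp (s • A) y)) 0 s := by
    refine (β.hasDerivAt_of_bilinear (fun _ => hexp x s) fun _ => hexp y s).congr_deriv ?_
    rw [hA, add_neg_cancel]
  have hconst := is_const_of_deriv_eq_zero (fun s => (hderiv s).differentiableAt)
    (fun s => (hderiv s).deriv) 1 0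
  simpa using hconst

theorem apply_self_eq_zero_of_tendsto_exp_apply [CompleteSpace V] {ι : Type*} {l : Filter ι}
    [l.NeBot] {A : ι → V →L[ℝ] V} {x : ι → V} {x₀ : V} (hA : ∀ i x y, β (A i x) y = -β x (A i y))
    (hx : ∀ᶠ i in l, β (x i) (x i) = 0) (hlim : Tendsto (fun i => exp (A i) (x i)) l (𝓝 x₀)) :
    β x₀ x₀ = 0 := by
  have hnull : ∀ᶠ i in l, β (exp (A i) (x i)) (exp (A i) (x i)) = 0 :=
    hx.mono fun i hi => (apply_exp_apply_exp (hA i) (x i) (x i)).trans hi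
  have hcont : Continuous fun y => β y y := by fun_prop
  exact tendsto_nhds_unique ((hcont.tendsto x₀).comp hlim)
    (tendsto_const_nhds.congr' (hnull.mono fun i hi => hi.symm))

theorem formWedge_formWedge_apply {p q : V} (hpp : β p p = 0) (hpq : β p q = 0) (hqp : β q p = 0)
    (x : V) : formWedge β p q (formWedge β p q x) = -(β p x * β q q) • p := by
  simp only [formWedge_apply, map_sub, map_smul, hpp, hpq, hqp]
  module

theorem formWedge_pow_three_eq_zero {p q : V} (hpp : β p p = 0) (hpq : β p q = 0)
    (hqp : β q p = 0) : formWedge β p q ^ 3 = 0 := by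
  ext x
  simp only [pow_succ, pow_zero, one_mul, mul_apply_eq_comp,
    formWedge_formWedge_apply hpp hpq hqp, zero_apply]
  simp [formWedge_apply, hpp, hqp]

theorem exp_smul_formWedge_apply {p q : V} (hpp : β p p = 0) (hpq : β p q = 0)
    (hqp : β q p = 0) (l : ℝ) (x : V) :
    exp (l • formWedge β p q) x =
      x + l • formWedge β p q x + (-(β p x * β q q) / 2 * l ^ 2) • p := by
  have hpow : (l • formWedge β p q) ^ 3 = 0 := by
    rw [smul_pow, formWedge_pow_three_eq_zero hpp hpq hqp, smul_zero]
  rw [exp_eq_sum_range_of_pow_eq_zero hpow]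
  simp only [Finset.sum_range_succ, Finset.sum_range_zero, add_apply, smul_apply, pow_succ,
    pow_zero, one_mul, mul_apply_eq_comp, map_smul, formWedge_formWedge_apply hpp hpq hqp]
  simp
  module

/-- `β` is symmetric and its totally isotropic subspaces have dimension at most one, expressed
through pairs of orthogonal null vectors; forms of Lorentzian signature are the main example. -/
structure HasWittIndexLEOne (β : V →L[ℝ] V →L[ℝ] ℝ) : Prop where
  symm : ∀ x y, β x y = β y x
  mem_span_singleton : ∀ x y, x ≠ 0 → β x x = 0 → β y y = 0 → β x y = 0 → y ∈ ℝ ∙ x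

theorem exists_tendsto_smul_exp_smul_formWedge (hβ : HasWittIndexLEOne β) {p q x : V} (hp : p ≠ 0)
    (hpp : β p p = 0) (hpq : β p q = 0) (hqq : β q q ≠ 0) (hx : x ≠ 0) (hxx : β x x = 0) :
    ∃ r : ℝ → ℝ, r =O[atBot] (fun _ => (1 : ℝ)) ∧
      Tendsto (fun l => r l • exp (l • formWedge β p q) x) atBot (𝓝 p) := by
  have hqp : β q p = 0 := by rw [hβ.symm, hpq]
  simp only [exp_smul_formWedge_apply hpp hpq hqp]
  by_cases hpx : β p x = 0
  · obtain ⟨k, rfl⟩ := Submodule.mem_span_singleton.1 (hβ.mem_span_singleton p x hp hpp hxx hpx)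
    have hk : k ≠ 0 := left_ne_zero_of_smul hx
    refine ⟨fun _ => k⁻¹, isBigO_const_const _ one_ne_zero _, tendsto_const_nhds.congr fun l => ?_⟩
    simp [formWedge_apply, hpp, hqp, inv_smul_smul₀ hk]
  · set μ := -(β p x * β q q) / 2
    have hμ : μ ≠ 0 := div_ne_zero (neg_ne_zero.2 (mul_ne_zero hpx hqq)) two_ne_zero
    have hinv : Tendsto (fun l : ℝ => l⁻¹) atBot (𝓝 0) := tendsto_inv_atBot_zero
    have hr : Tendsto (fun l : ℝ => μ⁻¹ * l⁻¹ ^ 2) atBot (𝓝 0) := by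
      simpa using (hinv.pow 2).const_mul μ⁻¹
    refine ⟨fun l => μ⁻¹ * l⁻¹ ^ 2, hr.isBigO_one ℝ, ?_⟩
    have hlim := ((hr.smul_const x).add
      ((hinv.const_mul μ⁻¹).smul_const (formWedge β p q x))).add_const p
    simp only [mul_zero, zero_smul, zero_add] at hlim
    refine hlim.congr' ?_
    filter_upwards [eventually_ne_atBot 0] with l hl
    match_scalars <;> field_simp

end FormWedge

theorem exists_forall_ne_zero_tendsto_smul {ι V : Type*} [AddCommGroup V] [Module ℝ V]
    [TopologicalSpace V] [T1Space V] {l : Filter ι} {r : ι → ℝ} {x : ι → V} {p : V} (hp : p ≠ 0)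
    (h : Tendsto (fun i => r i • x i) l (𝓝 p)) :
    ∃ r' : ι → ℝ, (∀ i, r' i ≠ 0) ∧ Tendsto (fun i => r' i • x i) l (𝓝 p) := by
  classical
  refine ⟨fun i => if r i = 0 then 1 else r i, fun i => ?_, h.congr' ?_⟩
  · change ite _ _ _ ≠ 0
    split_ifs with hi
    exacts [one_ne_zero, hi]
  · filter_upwards [h.eventually_ne hp] with i hi
    rw [if_neg (left_ne_zero_of_smul hi)]

theorem apply_hasDerivWithinAt_eq_zero {V : Type*} [NormedAddCommGroup V] [NormedSpace ℝ V]
    {β : V →L[ℝ] V →L[ℝ] ℝ} (hβ : ∀ x y, β x y = β y x) {c : ℝ → V} {c₀' : V} {s : Set ℝ} {t : ℝ}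
    (hs : UniqueDiffWithinAt ℝ s t) (ht : t ∈ s) (hc : HasDerivWithinAt c c₀' s t)
    (hnull : ∀ᶠ u in 𝓝[s] t, β (c u) (c u) = 0) : β (c t) c₀' = 0 := by
  have hprod := β.hasDerivWithinAt_of_bilinear hc hc
  have hconst : HasDerivWithinAt (fun u => β (c u) (c u)) 0 s t :=
    (hasDerivWithinAt_const t s (0 : ℝ)).congr_of_eventuallyEq hnull (hnull.self_of_nhdsWithin ht)
  have hsum : β (c t) c₀' + β c₀' (c t) = 0 := hs.eq_deriv _ hprod hconst
  linarith [hβ (c t) c₀']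

/-- The Minkowski product `mink` as a continuous bilinear form. -/
def minkForm : E n →L[ℝ] E n →L[ℝ] ℝ :=
  (LinearMap.mk₂ ℝ mink mink_add_left mink_smul_left mink_add_right
    fun k x y => mink_smul_right x k y).toContinuousBilinearMap

theorem eq_zero_of_mink_self_eq_zero {z : E n} (hz : mink z z = 0)
    (hlast : z (Fin.last (n + 1)) = 0) : z = 0 := by
  have hsum : mink z z = ∑ i, z i ^ 2 := by
    refine Finset.sum_congr rfl fun i _ => ?_
    split_ifs with hi
    · simp [hi, hlast]
    · ring
  rw [hsum, Finset.sum_eq_zero_iff_of_nonneg fun i _ => sq_nonneg (z i)] at hz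
  ext i
  simpa using hz i (Finset.mem_univ i)

theorem hasWittIndexLEOne_minkForm : HasWittIndexLEOne (minkForm (n := n)) where
  symm := mink_comm
  mem_span_singleton x y hx hxx hyy hxy := by
    have hlast : x (Fin.last (n + 1)) ≠ 0 := fun h => hx (eq_zero_of_mink_self_eq_zero hxx h)
    set k := y (Fin.last (n + 1)) / x (Fin.last (n + 1)) with hk
    have hyx : minkForm y x = 0 := (mink_comm y x).trans hxy
    have hnull : minkForm (k • x - y) (k • x - y) = 0 := by
      simp [hxx, hyy, hxy, hyx]
    have hzero : k • x - y = 0 := eq_zero_of_mink_self_eq_zero hnull (by simp [hk, hlast])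
    exact Submodule.mem_span_singleton.2 ⟨k, sub_eq_zero.1 hzero⟩

section Deriv

variable {F : Type*} [NormedAddCommGroup F] [NormedSpace ℝ F] {f : ℝ → F} {t : ℝ}

theorem eventually_hasDerivWithinAt_of_contDiffAt_one (hf : ContDiffAt ℝ 1 f t) (s : Set ℝ) :
    ∀ᶠ u in 𝓝 t, HasDerivWithinAt f (deriv f u) s u := by
  filter_upwards [hf.eventually (by simp)] with u hu
  exact (hu.differentiableAt one_ne_zero).hasDerivAt.hasDerivWithinAt

theorem differentiableAt_deriv_of_contDiffAt_two (hf : ContDiffAt ℝ 2 f t) :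
    DifferentiableAt ℝ (deriv f) t := by
  have hfderiv : ContDiffAt ℝ 1 (fderiv ℝ f) t := hf.fderiv_right (by norm_num)
  exact (hfderiv.differentiableAt one_ne_zero).clm_apply (differentiableAt_const 1)

end Deriv

theorem stmt12_general {V : Type*} [NormedAddCommGroup V] [NormedSpace ℝ V] [CompleteSpace V]
    {β : V →L[ℝ] V →L[ℝ] ℝ} (hβ : HasWittIndexLEOne β) {c c' ch : ℝ → V} {α lam : ℝ} (hα : 0 < α)
    (hc : ∀ᶠ t in 𝓝[≥] 0, HasDerivWithinAt c (c' t) (Ici 0) t)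
    (hc' : (fun t => c' t - c' 0) =O[𝓝[>] 0] fun t => t ^ α)
    (hcnull : ∀ᶠ t in 𝓝[≥] 0, β (c t) (c t) = 0) (hcne : c 0 ≠ 0) (hcreg : β (c' 0) (c' 0) ≠ 0)
    (hlam : lam ≠ 0) (hchne : ∃ᶠ t in 𝓝[>] 0, ch t ≠ 0)
    (hchnull : ∀ᶠ t in 𝓝[>] 0, β (ch t) (ch t) = 0)
    (hch : ∀ᶠ t in 𝓝[>] 0,
      HasDerivAt ch ((lam / t) • (β (c t) (ch t) • c' t - β (c' t) (ch t) • c t)) t) :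
    ∃ r : ℝ → ℝ, (∀ t, r t ≠ 0) ∧ Tendsto (fun t => r t • ch t) (𝓝[>] 0) (𝓝 (c 0)) := by
  have hc0 : HasDerivWithinAt c (c' 0) (Ici 0) 0 := hc.self_of_nhdsWithin self_mem_Ici
  have hcnull0 : β (c 0) (c 0) = 0 := hcnull.self_of_nhdsWithin self_mem_Ici
  have horth : β (c 0) (lam • c' 0) = 0 := by
    rw [map_smul, apply_hasDerivWithinAt_eq_zero hβ.symm (uniqueDiffWithinAt_Ici 0) self_mem_Ici
      hc0 hcnull, smul_zero]
  have hnil : IsNilpotent (formWedge β (c 0) (lam • c' 0)) :=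
    ⟨3, formWedge_pow_three_eq_zero hcnull0 horth (by rw [hβ.symm, horth])⟩
  have hB : (fun t => formWedge β (c t) (lam • c' t) - formWedge β (c 0) (lam • c' 0))
      =O[𝓝[>] 0] fun t => t ^ min α 1 := isBigO_formWedge_smul_sub hα lam hc0 hc'
  have hode : ∀ᶠ t in 𝓝[>] 0,
      HasDerivAt ch (t⁻¹ • formWedge β (c t) (lam • c' t) (ch t)) t := by
    filter_upwards [hch] with t ht
    refine ht.congr_deriv ?_
    simp only [formWedge_apply, map_smul, smul_apply, smul_eq_mul]
    module
  obtain ⟨v₀, hv₀, hlim, hasymp⟩ :=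
    exists_tendsto_sub_exp_log_smul_apply hnil (lt_min hα one_pos) hB hode hchne
  have hv₀null : β v₀ v₀ = 0 :=
    apply_self_eq_zero_of_tendsto_exp_apply
      (fun t x y => by simp [apply_formWedge_apply hβ.symm]) hchnull hlim
  obtain ⟨r, hr, hrlim⟩ := exists_tendsto_smul_exp_smul_formWedge hβ hcne hcnull0 horth
    (by simpa [hlam] using hcreg) hv₀ hv₀null
  refine exists_forall_ne_zero_tendsto_smul (r := fun t => r (Real.log t)) hcne ?_
  have hlog := Real.tendsto_log_nhdsGT_zero
  have hdiff : Tendsto (fun t => r (Real.log t) •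
      (ch t - exp (Real.log t • formWedge β (c 0) (lam • c' 0)) v₀)) (𝓝[>] 0) (𝓝 0) :=
    ((hr.comp_tendsto hlog).smul (isBigO_refl _ _)).trans_tendsto (by simpa using hasymp)
  simpa [smul_sub] using (hrlim.comp hlog).add hdiff

/-- Theorem 4.2: at a first-order pole, every Darboux transform converges
to the original curve. -/
theorem stmt12 {n : ℕ} (ε b : ℝ) (hε : 0 < ε) (hb : 0 < b)
    (c : ℝ → E n) (hc : ContDiffOn ℝ (⊤ : ℕ∞) c (Set.Ioo (-ε) b))
    (hcnull : ∀ t ∈ Set.Ioo (-ε) b, mink (c t) (c t) = 0)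
    (hcne : ∀ t ∈ Set.Ioo (-ε) b, c t ≠ 0)
    (hcreg : ∀ t ∈ Set.Ioo (-ε) b, 0 < mink (deriv c t) (deriv c t))
    (lam : ℝ) (hlam : lam ≠ 0)
    (ch : ℝ → E n)
    (hchne : ∀ t ∈ Set.Ioo (0:ℝ) b, ch t ≠ 0)
    (hchnull : ∀ t ∈ Set.Ioo (0:ℝ) b, mink (ch t) (ch t) = 0)
    (hch : ∀ t ∈ Set.Ioo (0:ℝ) b, HasDerivAt ch
      ((lam / t) • (mink (c t) (ch t) • deriv c t - mink (deriv c t) (ch t) • c t)) t) :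
    ∃ r : ℝ → ℝ, (∀ t ∈ Set.Ioo (0:ℝ) b, r t ≠ 0) ∧
      Tendsto (fun t : ℝ => r t • ch t) (𝓝[>] 0) (𝓝 (c 0)) := by
  have hpos : Ioo 0 b ∈ 𝓝[>] (0 : ℝ) := Ioo_mem_nhdsGT hb
  have hmem : Ioo (-ε) b ∈ 𝓝 (0 : ℝ) := Ioo_mem_nhds (neg_lt_zero.2 hε) hb
  have h0 : (0 : ℝ) ∈ Ioo (-ε) b := mem_of_mem_nhds hmem
  have hsmooth : ContDiffAt ℝ 2 c 0 :=
    mod_cast contDiffAt_infty.1 (hc.contDiffAt hmem) 2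
  have hlip : (fun t => deriv c t - deriv c 0) =O[𝓝[>] 0] fun t => t ^ (1 : ℝ) := by
    simpa using (differentiableAt_deriv_of_contDiffAt_two hsmooth).isBigO_sub.mono
      nhdsWithin_le_nhds
  have hderiv := eventually_hasDerivWithinAt_of_contDiffAt_one (hsmooth.of_le one_le_two) (Ici 0)
  obtain ⟨r, hr, hlim⟩ := stmt12_general hasWittIndexLEOne_minkForm one_pos
    (nhdsWithin_le_nhds hderiv) hlip (nhdsWithin_le_nhds (mem_of_superset hmem hcnull))
    (hcne 0 h0) (hcreg 0 h0).ne' hlam (Eventually.frequently (mem_of_superset hpos hchne))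
    (mem_of_superset hpos hchnull) (mem_of_superset hpos hch)
  exact ⟨r, fun t _ => hr t, hlim⟩
end
end

section
/- Let ε,b > 0 and let c:(−ε,b) → ℝ^{n+2} be smooth with ⟨c(t),c(t)⟩ = 0, c(t) ≠ 0 and ⟨c′(t),c′(t)⟩ = 1 for all t. Let λ ∈ ℝ∖{0} with 2λ ≤ 1, and let ĉ:(0,b) → ℝ^{n+2} be differentiable with ĉ(t) ≠ 0 and ⟨ĉ(t),ĉ(t)⟩ = 0 for all t, satisfying ĉ′(t) = −(λ/t²)·(⟨c(t),ĉ(t)⟩c′(t) − ⟨c′(t),ĉ(t)⟩c(t)) for all t ∈ (0,b). Then there exist nonzero reals r(t) such that r(t)·ĉ(t) → c(0) as t → 0⁺; that is, the λ-Darboux transform converges projectively to the point ⟨c(0)⟩. -/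
open scoped BigOperators Topology
open Filter Set MeasureTheory

noncomputable section

variable {n : ℕ}

/-!
Differentiating a flat lift `c` produces a null frame `c, c', N`. In this frame the Darboux
transform `ĉ` has components `x = ⟨c, ĉ⟩`, `y = ⟨c', ĉ⟩`, `z = ⟨N, ĉ⟩`, and the rescaling
`X = x / t`, `Y = y`, `Z = t z` turns the parallel section equation into a system of Fuchsian type
at `0` whose solutions stay, after a change of sign, in the forward light cone of `ℝ³`.

If `lam = s - s² / 2`, then `Z - s Y + s² / 2 X` is a left eigenvector of the residue matrix. For
`2 lam < 1` there are two such `s`, and a logistic differential inequality for the corresponding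
eigencoordinates shows that one of them becomes negligible relative to `X + Z`. For `2 lam = 1` the
only eigencoordinate is negligible as well; here one has to unwind the logarithms coming from the
nilpotent residue. As `s ≠ 0`, a light cone vector with negligible eigencoordinate satisfies
`δ X ≤ Z`, so that `x / z = O(t²)` and `-z⁻¹ ĉ` tends to `c(0)`.
-/

/-! ### Asymptotics at an endpoint from differential inequalities -/

lemma tendsto_div_zero_of_le_mul {ι : Type*} {l : Filter ι} {K : ℝ} {f g h : ι → ℝ}
    (hfgh : ∀ᶠ i in l, 0 ≤ f i ∧ 0 < g i ∧ 0 < h i ∧ g i ≤ K * h i)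
    (hlim : Tendsto (fun i ↦ f i / g i) l (𝓝 0)) : Tendsto (fun i ↦ f i / h i) l (𝓝 0) := by
  have hlim' : Tendsto (fun i ↦ K * (f i / g i)) l (𝓝 0) := by simpa using hlim.const_mul K
  refine tendsto_of_tendsto_of_tendsto_of_le_of_le' tendsto_const_nhds hlim' ?_ ?_
  · filter_upwards [hfgh] with i ⟨hf, _, hh, _⟩ using div_nonneg hf hh.le
  · filter_upwards [hfgh] with i ⟨hf, hg, hh, hle⟩
    rw [← mul_div_assoc, div_le_div_iff₀ hh hg]
    linarith [mul_le_mul_of_nonneg_left hle hf]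

lemma monotoneOn_Ioo_of_hasDerivAt_nonneg {a b : ℝ} {f f' : ℝ → ℝ}
    (hf : ∀ t ∈ Ioo a b, HasDerivAt f (f' t) t) (hf' : ∀ t ∈ Ioo a b, 0 ≤ f' t) :
    MonotoneOn f (Ioo a b) := by
  apply monotoneOn_of_hasDerivWithinAt_nonneg (f' := f') (convex_Ioo a b)
    (HasDerivAt.continuousOn hf)
  · rw [interior_Ioo]
    exact fun t ht ↦ (hf t ht).hasDerivWithinAt
  · rwa [interior_Ioo]

lemma exists_forall_mem_Ioo_of_eventually_nhdsGT {a b : ℝ} {p : ℝ → Prop} (hab : a < b)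
    (h : ∀ᶠ t in 𝓝[>] a, p t) : ∃ τ ∈ Ioc a b, ∀ t ∈ Ioo a τ, p t := by
  obtain ⟨τ, hτ, hsub⟩ := (mem_nhdsGT_iff_exists_mem_Ioc_Ioo_subset hab).1 h
  exact ⟨τ, hτ, fun t ht ↦ hsub ht⟩

lemma tendsto_atBot_of_div_sub_le_deriv {τ k C : ℝ} {f f' : ℝ → ℝ} (hτ : 0 < τ) (hk : 0 < k)
    (hf : ∀ t ∈ Ioo 0 τ, HasDerivAt f (f' t) t) (hf' : ∀ t ∈ Ioo 0 τ, k / t - C ≤ f' t) :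
    Tendsto f (𝓝[>] 0) atBot := by
  have hmono : MonotoneOn (fun t ↦ f t - k * Real.log t + C * t) (Ioo 0 τ) := by
    apply monotoneOn_Ioo_of_hasDerivAt_nonneg (f' := fun t ↦ f' t - k * t⁻¹ + C * 1)
    · exact fun t ht ↦ ((hf t ht).sub ((Real.hasDerivAt_log ht.1.ne').const_mul k)).add
        ((hasDerivAt_id t).const_mul C)
    · intro t ht
      have := hf' t ht
      rw [div_eq_mul_inv] at this
      linarith
  obtain ⟨s, hs⟩ := nonempty_Ioo.2 hτ
  have hbound : Tendsto (fun t ↦ k * Real.log t + (f s - k * Real.log s + C * s - C * t))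
      (𝓝[>] 0) atBot := by
    have hcont : Continuous fun t ↦ f s - k * Real.log s + C * s - C * t := by fun_prop
    exact (Real.tendsto_log_nhdsGT_zero.const_mul_atBot hk).atBot_add
      ((hcont.tendsto 0).mono_left nhdsWithin_le_nhds)
  refine tendsto_atBot_mono' _ ?_ hbound
  filter_upwards [Ioo_mem_nhdsGT hs.1] with t ht
  have : f t - k * Real.log t + C * t ≤ f s - k * Real.log s + C * s :=
    hmono ⟨ht.1, ht.2.trans hs.2⟩ hs ht.2.le
  linarith

lemma exists_tendsto_of_norm_deriv_le {F : Type*} [NormedAddCommGroup F] [NormedSpace ℝ F]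
    [CompleteSpace F] {a b : ℝ} {f f' : ℝ → F} {g g' : ℝ → ℝ} (hab : a < b)
    (hf : ∀ t ∈ Ioo a b, HasDerivAt f (f' t) t) (hg : ∀ t ∈ Ioo a b, HasDerivAt g (g' t) t)
    (hfg : ∀ t ∈ Ioo a b, ‖f' t‖ ≤ g' t) (hg0 : Tendsto g (𝓝[>] a) (𝓝 0)) :
    ∃ L, Tendsto f (𝓝[>] a) (𝓝 L) ∧ ∀ t ∈ Ioo a b, ‖f t - L‖ ≤ g t := by
  have hdist : ∀ s ∈ Ioo a b, ∀ t ∈ Ioo a b, s ≤ t → ‖f t - f s‖ ≤ g t - g s := by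
    intro s hs t ht hst
    have hsub : Icc s t ⊆ Ioo a b := Icc_subset_Ioo hs.1 ht.2
    refine image_norm_le_of_norm_deriv_right_le_deriv_boundary' (f' := f')
      (B := fun r ↦ g r - g s) (B' := g')
      ((HasDerivAt.continuousOn fun r hr ↦ hf r (hsub hr)).sub continuousOn_const)
      (fun r hr ↦ ((hf r (hsub (Ico_subset_Icc_self hr))).sub_const _).hasDerivWithinAt)
      (by simp) ((HasDerivAt.continuousOn fun r hr ↦ hg r (hsub hr)).sub continuousOn_const)
      (fun r hr ↦ ((hg r (hsub (Ico_subset_Icc_self hr))).sub_const _).hasDerivWithinAt)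
      (fun r hr ↦ hfg r (hsub (Ico_subset_Icc_self hr))) ⟨hst, le_rfl⟩
  have hab' : ∀ᶠ s in 𝓝[>] a, s ∈ Ioo a b := Ioo_mem_nhdsGT hab
  have hg_nonneg : ∀ t ∈ Ioo a b, 0 ≤ g t := by
    intro t ht
    refine le_of_tendsto hg0 ?_
    filter_upwards [Ioo_mem_nhdsGT ht.1, hab'] with s hs hs'
    linarith [norm_nonneg (f t - f s), hdist s hs' t ht hs.2.le]
  have hcauchy : Cauchy (map f (𝓝[>] a)) := by
    refine Metric.cauchy_iff.2 ⟨inferInstance, fun ε hε ↦ ?_⟩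
    refine ⟨f '' {t | t ∈ Ioo a b ∧ g t < ε},
      image_mem_map (hab'.and (hg0.eventually (gt_mem_nhds hε))), ?_⟩
    rintro _ ⟨s, ⟨hs, hsε⟩, rfl⟩ _ ⟨t, ⟨ht, htε⟩, rfl⟩
    rw [dist_eq_norm]
    rcases le_total s t with hst | hts
    · rw [norm_sub_rev]
      linarith [hdist s hs t ht hst, hg_nonneg s hs]
    · linarith [hdist t ht s hs hts, hg_nonneg t ht]
  obtain ⟨L, hL⟩ := cauchy_map_iff_exists_tendsto.1 hcauchy
  refine ⟨L, hL, fun t ht ↦ ?_⟩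
  have hlim : Tendsto (fun s ↦ g t - g s) (𝓝[>] a) (𝓝 (g t)) := by
    simpa using hg0.const_sub (g t)
  refine le_of_tendsto_of_tendsto (hL.const_sub (f t)).norm hlim ?_
  filter_upwards [Ioo_mem_nhdsGT ht.1, hab'] with s hs hs'
  exact hdist s hs' t ht hs.2.le

lemma exists_pos_tendsto_of_abs_deriv_le_mul {a b : ℝ} {f f' g g' : ℝ → ℝ} (hab : a < b)
    (hpos : ∀ t ∈ Ioo a b, 0 < f t) (hf : ∀ t ∈ Ioo a b, HasDerivAt f (f' t) t)
    (hg : ∀ t ∈ Ioo a b, HasDerivAt g (g' t) t) (hfg : ∀ t ∈ Ioo a b, |f' t| ≤ g' t * f t)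
    (hg0 : Tendsto g (𝓝[>] a) (𝓝 0)) : ∃ L > 0, Tendsto f (𝓝[>] a) (𝓝 L) := by
  have hlog : ∀ t ∈ Ioo a b, ‖f' t / f t‖ ≤ g' t := fun t ht ↦ by
    rw [Real.norm_eq_abs, abs_div, abs_of_pos (hpos t ht), div_le_iff₀ (hpos t ht)]
    exact hfg t ht
  obtain ⟨L, hL, -⟩ := exists_tendsto_of_norm_deriv_le hab
    (fun t ht ↦ (hf t ht).log (hpos t ht).ne') hg hlog hg0
  refine ⟨Real.exp L, Real.exp_pos L, ((Real.continuous_exp.tendsto L).comp hL).congr' ?_⟩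
  filter_upwards [Ioo_mem_nhdsGT hab] with t ht using Real.exp_log (hpos t ht)

lemma exists_tendsto_of_neg_le_deriv {τ m C : ℝ} {f f' : ℝ → ℝ} (hτ : 0 < τ)
    (hf : ∀ t ∈ Ioo 0 τ, HasDerivAt f (f' t) t) (hm : ∀ t ∈ Ioo 0 τ, m ≤ f t)
    (hf' : ∀ t ∈ Ioo 0 τ, -C ≤ f' t) : ∃ L, Tendsto f (𝓝[>] 0) (𝓝 L) := by
  have hmono : MonotoneOn (fun t ↦ f t + C * t) (Ioo 0 τ) :=
    monotoneOn_Ioo_of_hasDerivAt_nonneg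
      (fun t ht ↦ (hf t ht).add ((hasDerivAt_id t).const_mul C))
      fun t ht ↦ by linarith [hf' t ht]
  have hbdd : BddBelow ((fun t ↦ f t + C * t) '' Ioo 0 τ) := by
    refine ⟨m - |C| * τ, ?_⟩
    rintro _ ⟨t, ht, rfl⟩
    have hCt : |C * t| ≤ |C| * τ := by
      rw [abs_mul, abs_of_pos ht.1]
      exact mul_le_mul_of_nonneg_left ht.2.le (abs_nonneg C)
    linarith [neg_abs_le (C * t), hm t ht]
  have hCt : Tendsto (fun t : ℝ ↦ C * t) (𝓝[>] 0) (𝓝 0) := by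
    simpa using ((continuous_const_mul C).tendsto 0).mono_left nhdsWithin_le_nhds
  have hlim := hmono.tendsto_nhdsWithin_Ioo_right (nonempty_Ioo.2 hτ) hbdd
  exact ⟨_, (hlim.sub hCt).congr fun t ↦ by ring⟩

lemma tendsto_zero_or_one_of_logistic_le {τ k C : ℝ} {f f' : ℝ → ℝ} (hτ : 0 < τ) (hk : 0 < k)
    (hf : ∀ t ∈ Ioo 0 τ, HasDerivAt f (f' t) t) (hf01 : ∀ t ∈ Ioo 0 τ, f t ∈ Icc 0 1)
    (hf' : ∀ t ∈ Ioo 0 τ, k * (f t * (1 - f t)) / t - C ≤ f' t) :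
    Tendsto f (𝓝[>] 0) (𝓝 0) ∨ Tendsto f (𝓝[>] 0) (𝓝 1) := by
  obtain ⟨L, hfL⟩ := exists_tendsto_of_neg_le_deriv (C := C) hτ hf (fun t ht ↦ (hf01 t ht).1)
    fun t ht ↦ by
      have : 0 ≤ k * (f t * (1 - f t)) / t := div_nonneg
        (mul_nonneg hk.le (mul_nonneg (hf01 t ht).1 (sub_nonneg.2 (hf01 t ht).2))) ht.1.le
      linarith [hf' t ht]
  have hL01 : L ∈ Icc 0 1 := isClosed_Icc.mem_of_tendsto hfL <| by
    filter_upwards [Ioo_mem_nhdsGT hτ] with t ht using hf01 t ht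
  rcases hL01.1.eq_or_lt with rfl | hL0
  · exact Or.inl hfL
  rcases hL01.2.eq_or_lt with rfl | hL1
  · exact Or.inr hfL
  have hp : 0 < L * (1 - L) := mul_pos hL0 (sub_pos.2 hL1)
  have hev : ∀ᶠ t in 𝓝[>] 0, L * (1 - L) / 2 < f t * (1 - f t) :=
    (hfL.mul (hfL.const_sub 1)).eventually (lt_mem_nhds (half_lt_self hp))
  obtain ⟨ρ, hρ, hlow⟩ := exists_forall_mem_Ioo_of_eventually_nhdsGT hτ hev
  have hbot : Tendsto f (𝓝[>] 0) atBot := by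
    refine tendsto_atBot_of_div_sub_le_deriv (k := k * (L * (1 - L) / 2)) (C := C) hρ.1
      (by positivity) (fun t ht ↦ hf t ⟨ht.1, ht.2.trans_le hρ.2⟩) fun t ht ↦ ?_
    refine le_trans ?_ (hf' t ⟨ht.1, ht.2.trans_le hρ.2⟩)
    have := hlow t ht
    have := ht.1
    gcongr
  exact absurd hbot (not_tendsto_atBot_of_tendsto_nhds hfL)

lemma tendsto_ratio_zero_or_of_eigenvalue_gap {τ α β D : ℝ} {A B E₁ E₂ : ℝ → ℝ} (hτ : 0 < τ)
    (hαβ : β < α) (hA : ∀ t ∈ Ioo 0 τ, 0 ≤ A t) (hB : ∀ t ∈ Ioo 0 τ, 0 ≤ B t)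
    (hAB : ∀ t ∈ Ioo 0 τ, 0 < A t + B t)
    (dA : ∀ t ∈ Ioo 0 τ, HasDerivAt A (α * A t / t + E₁ t) t)
    (dB : ∀ t ∈ Ioo 0 τ, HasDerivAt B (β * B t / t + E₂ t) t)
    (hE₁ : ∀ t ∈ Ioo 0 τ, |E₁ t| ≤ D * (A t + B t))
    (hE₂ : ∀ t ∈ Ioo 0 τ, |E₂ t| ≤ D * (A t + B t)) :
    Tendsto (fun t ↦ A t / (A t + B t)) (𝓝[>] 0) (𝓝 0) ∨
      Tendsto (fun t ↦ B t / (A t + B t)) (𝓝[>] 0) (𝓝 0) := by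
  have hlogistic := tendsto_zero_or_one_of_logistic_le (k := α - β) (C := D) hτ (sub_pos.2 hαβ)
    (fun t ht ↦ (dA t ht).div ((dA t ht).add (dB t ht)) (hAB t ht).ne')
    (fun t ht ↦ ⟨div_nonneg (hA t ht) (hAB t ht).le,
      (div_le_one (hAB t ht)).2 (le_add_of_nonneg_right (hB t ht))⟩) ?_
  · refine hlogistic.imp_right fun h ↦ ?_
    have hsub : Tendsto (fun t ↦ 1 - A t / (A t + B t)) (𝓝[>] 0) (𝓝 0) := by
      simpa using h.const_sub 1
    refine hsub.congr' ?_
    filter_upwards [Ioo_mem_nhdsGT hτ] with t ht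
    have := (hAB t ht).ne'
    field_simp
    ring
  · intro t ht
    have ht0 := ht.1
    have hpos := hAB t ht
    have hderiv : ((α * A t / t + E₁ t) * (A t + B t)
          - A t * (α * A t / t + E₁ t + (β * B t / t + E₂ t))) / (A t + B t) ^ 2
        = (α - β) * (A t / (A t + B t) * (1 - A t / (A t + B t))) / t
          + (B t * E₁ t - A t * E₂ t) / (A t + B t) ^ 2 := by
      field_simp
      ring
    have herror : -D ≤ (B t * E₁ t - A t * E₂ t) / (A t + B t) ^ 2 := by
      rw [le_div_iff₀ (by positivity)]
      have h₁ := mul_le_mul_of_nonneg_left (abs_le.1 (hE₁ t ht)).1 (hB t ht)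
      have h₂ := mul_le_mul_of_nonneg_left (abs_le.1 (hE₂ t ht)).2 (hA t ht)
      linarith
    simp only [Pi.add_apply, Pi.div_apply]
    rw [hderiv]
    linarith

lemma tendsto_const_mul_sqrt_nhdsGT_zero (K : ℝ) :
    Tendsto (fun t ↦ K * √t) (𝓝[>] 0) (𝓝 0) := by
  simpa using ((Real.continuous_sqrt.tendsto 0).const_mul K).mono_left nhdsWithin_le_nhds

lemma tendsto_sqrt_mul_two_add_log_sq_sq :
    Tendsto (fun t : ℝ ↦ √t * (2 + Real.log t ^ 2) ^ 2) (𝓝[>] 0) (𝓝 0) := by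
  have hpow : Tendsto (fun t : ℝ ↦ t ^ (1 / 4 : ℝ)) (𝓝[>] 0) (𝓝 0) := by
    have : ContinuousAt (fun t : ℝ ↦ t ^ (1 / 4 : ℝ)) 0 :=
      Real.continuousAt_rpow_const 0 _ (Or.inr (by norm_num))
    simpa using this.tendsto.mono_left nhdsWithin_le_nhds
  have hlog : Tendsto (fun t : ℝ ↦ Real.log t * t ^ (1 / 8 : ℝ)) (𝓝[>] 0) (𝓝 0) :=
    tendsto_log_mul_rpow_nhdsGT_zero (by norm_num)
  have hlim : Tendsto (fun t : ℝ ↦ (2 * t ^ (1 / 4 : ℝ) + (Real.log t * t ^ (1 / 8 : ℝ)) ^ 2) ^ 2)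
      (𝓝[>] 0) (𝓝 0) := by
    simpa using ((hpow.const_mul 2).add (hlog.pow 2)).pow 2
  refine hlim.congr' ?_
  filter_upwards [self_mem_nhdsWithin] with t (ht : 0 < t)
  have h₈ : (t ^ (1 / 8 : ℝ)) ^ 2 = t ^ (1 / 4 : ℝ) := by
    rw [← Real.rpow_mul_natCast ht.le]
    norm_num
  have h₄ : (t ^ (1 / 4 : ℝ)) ^ 2 = √t := by
    rw [← Real.rpow_mul_natCast ht.le, Real.sqrt_eq_rpow]
    norm_num
  rw [mul_pow, h₈, ← h₄]
  ring

/-! ### The light cone of ℝ³ and its null forms -/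

/-- The closed forward light cone of the form `2xz - y²` on `ℝ³`. -/
structure InLightCone (x y z : ℝ) : Prop where
  left_nonneg : 0 ≤ x
  right_nonneg : 0 ≤ z
  sq_le : y ^ 2 ≤ 2 * x * z

/-- The value at `(x, y, z)` of the pairing with the vector `(1, s, s²/2)` on the boundary of the
light cone. -/
def nullForm (s x y z : ℝ) : ℝ := z - s * y + s ^ 2 / 2 * x

section LightCone

variable {x y z : ℝ}

lemma InLightCone.symm (h : InLightCone x y z) : InLightCone z y x :=
  ⟨h.right_nonneg, h.left_nonneg, by linarith [h.sq_le]⟩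

lemma InLightCone.rescale {k : ℝ} (h : InLightCone x y z) (hk : 0 < k) :
    InLightCone (x / k) y (k * z) := by
  refine ⟨div_nonneg h.left_nonneg hk.le, mul_nonneg hk.le h.right_nonneg, h.sq_le.trans_eq ?_⟩
  field_simp

lemma InLightCone.pairing_nonneg {p q r : ℝ} (h : InLightCone x y z) (h' : InLightCone p r q) :
    0 ≤ p * z + q * x + r * y := by
  have hq := mul_nonneg h'.right_nonneg h.left_nonneg
  have hp := mul_nonneg h'.left_nonneg h.right_nonneg
  have hsq : (r * y) ^ 2 ≤ (p * z + q * x) ^ 2 :=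
    calc (r * y) ^ 2 = r ^ 2 * y ^ 2 := mul_pow r y 2
      _ ≤ (2 * p * q) * (2 * x * z) :=
        mul_le_mul h'.sq_le h.sq_le (sq_nonneg y) ((sq_nonneg r).trans h'.sq_le)
      _ ≤ (p * z + q * x) ^ 2 := by nlinarith [sq_nonneg (p * z - q * x)]
  linarith [neg_abs_le (r * y), abs_le_of_sq_le_sq hsq (by positivity)]

lemma InLightCone.abs_middle_le (h : InLightCone x y z) : |y| ≤ x + z :=
  abs_le_of_sq_le_sq (by nlinarith [h.sq_le, sq_nonneg x, sq_nonneg z])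
    (add_nonneg h.left_nonneg h.right_nonneg)

lemma InLightCone.nullForm_nonneg (h : InLightCone x y z) (s : ℝ) : 0 ≤ nullForm s x y z := by
  have := h.pairing_nonneg (p := 1) (q := s ^ 2 / 2) (r := -s)
    ⟨zero_le_one, by positivity, by linarith⟩
  unfold nullForm
  linarith

lemma InLightCone.sq_div_four_mul_le (h : InLightCone x y z) (s : ℝ) :
    s ^ 2 / 4 * x ≤ z + nullForm s x y z := by
  have := h.nullForm_nonneg (s / 2)
  unfold nullForm at this ⊢
  linarith

lemma InLightCone.shear (h : InLightCone x y z) (s : ℝ) :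
    InLightCone x (y - s * x) (nullForm s x y z) :=
  ⟨h.left_nonneg, h.nullForm_nonneg s, by unfold nullForm; linarith [h.sq_le]⟩

lemma InLightCone.add_nullForm_le (h : InLightCone x y z) (s : ℝ) :
    x + nullForm s x y z ≤ (2 + s ^ 2) * (x + z) := by
  have := h.nullForm_nonneg (-s)
  have := mul_nonneg (sq_nonneg s) h.right_nonneg
  unfold nullForm at *
  linarith [h.left_nonneg, h.right_nonneg]

lemma InLightCone.nullForm_le (h : InLightCone x y z) (s : ℝ) :
    nullForm s x y z ≤ (2 + s ^ 2) * (x + z) := by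
  linarith [h.add_nullForm_le s, h.left_nonneg]

lemma InLightCone.add_le_add_nullForm (h : InLightCone x y z) (s : ℝ) :
    x + z ≤ (2 + s ^ 2) * (x + nullForm s x y z) := by
  have hinv : nullForm (-s) x (y - s * x) (nullForm s x y z) = z := by
    unfold nullForm
    ring
  simpa only [hinv, neg_sq] using (h.shear s).add_nullForm_le (-s)

-- The right-hand side minus the left-hand side is the pairing with the vector
-- `(6, -2 (3 + μ²), 3 + 2 μ² + μ⁴)`, which lies in the light cone.
lemma InLightCone.mul_add_le_nullForm_add_nullForm (h : InLightCone x y z) (μ : ℝ) :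
    2 * μ ^ 2 * (x + z) ≤ (3 + μ ^ 2) * (nullForm (1 - μ) x y z + nullForm (1 + μ) x y z) := by
  have := h.pairing_nonneg (p := 6) (q := 3 + 2 * μ ^ 2 + μ ^ 4) (r := -(2 * (3 + μ ^ 2)))
    ⟨by norm_num, by positivity, by nlinarith [sq_nonneg (μ ^ 2)]⟩
  unfold nullForm
  linarith

/-- The sum `x + z` of the outer coordinates of the light cone vector obtained from `(x, y, z)` by
shearing with `1`, reversing the order of the coordinates and shearing with `l`. For `l = log t`
the second shear undoes the rotation of the solutions of `x' = y / t`, `y' = z / t`, `z' = 0`. -/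
def unwoundSum (l x y z : ℝ) : ℝ :=
  nullForm 1 x y z + nullForm l (nullForm 1 x y z) (y - x) x

lemma InLightCone.shear_one_symm (h : InLightCone x y z) :
    InLightCone (nullForm 1 x y z) (y - x) x := by
  simpa only [one_mul] using (h.shear 1).symm

lemma InLightCone.add_le_unwoundSum (h : InLightCone x y z) (l : ℝ) :
    x + z ≤ 3 * (2 + l ^ 2) * unwoundSum l x y z := by
  have := h.add_le_add_nullForm 1
  have := h.shear_one_symm.add_le_add_nullForm l
  unfold unwoundSum
  linarith

lemma InLightCone.unwoundSum_le (h : InLightCone x y z) (l : ℝ) :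
    unwoundSum l x y z ≤ 3 * (2 + l ^ 2) * (x + z) := by
  have h₁ : nullForm 1 x y z + x ≤ 3 * (x + z) := by linarith [h.add_nullForm_le 1]
  calc unwoundSum l x y z ≤ (2 + l ^ 2) * (nullForm 1 x y z + x) :=
        h.shear_one_symm.add_nullForm_le l
    _ ≤ (2 + l ^ 2) * (3 * (x + z)) := by gcongr
    _ = 3 * (2 + l ^ 2) * (x + z) := by ring

lemma InLightCone.neg_mul_nullForm_le (h : InLightCone x y z) (l : ℝ) :
    -l * nullForm 1 x y z ≤ 3 * (x + z) + unwoundSum l x y z := by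
  have h₁ : |y - x| ≤ nullForm 1 x y z + x := h.shear_one_symm.abs_middle_le
  have h₂ : |y - x - l * nullForm 1 x y z| ≤ unwoundSum l x y z :=
    (h.shear_one_symm.shear l).abs_middle_le
  linarith [(abs_le.1 h₁).1, (abs_le.1 h₂).2, h.add_nullForm_le 1]

end LightCone

/-! ### The reduced system -/

/-- The system satisfied on `(0, τ)` by the rescaled coordinates `X = x / t`, `Y = y`, `Z = t z` of
a Darboux transform in the frame of the curve: it is of Fuchsian type at `0`, up to the error terms
`e₁` and `e₂`, and its solutions stay in the light cone. -/
structure IsDarbouxSystem (lam C τ : ℝ) (X Y Z e₁ e₂ : ℝ → ℝ) : Prop where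
  inLightCone : ∀ t ∈ Ioo 0 τ, InLightCone (X t) (Y t) (Z t)
  add_pos : ∀ t ∈ Ioo 0 τ, 0 < X t + Z t
  hasDerivAt_left : ∀ t ∈ Ioo 0 τ, HasDerivAt X ((Y t - X t) / t) t
  hasDerivAt_middle : ∀ t ∈ Ioo 0 τ, HasDerivAt Y ((Z t - lam * X t) / t + e₁ t) t
  hasDerivAt_right : ∀ t ∈ Ioo 0 τ, HasDerivAt Z ((Z t - lam * Y t) / t + e₂ t) t
  abs_error_middle_le : ∀ t ∈ Ioo 0 τ, |e₁ t| ≤ C * (X t + Z t)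
  abs_error_right_le : ∀ t ∈ Ioo 0 τ, |e₂ t| ≤ C * (X t + Z t)

namespace IsDarbouxSystem

variable {lam C τ : ℝ} {X Y Z e₁ e₂ : ℝ → ℝ}

lemma mono {σ : ℝ} (h : IsDarbouxSystem lam C τ X Y Z e₁ e₂) (hσ : σ ≤ τ) :
    IsDarbouxSystem lam C σ X Y Z e₁ e₂ :=
  have hsub : Ioo 0 σ ⊆ Ioo 0 τ := Ioo_subset_Ioo_right hσ
  { inLightCone := fun t ht ↦ h.inLightCone t (hsub ht)
    add_pos := fun t ht ↦ h.add_pos t (hsub ht)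
    hasDerivAt_left := fun t ht ↦ h.hasDerivAt_left t (hsub ht)
    hasDerivAt_middle := fun t ht ↦ h.hasDerivAt_middle t (hsub ht)
    hasDerivAt_right := fun t ht ↦ h.hasDerivAt_right t (hsub ht)
    abs_error_middle_le := fun t ht ↦ h.abs_error_middle_le t (hsub ht)
    abs_error_right_le := fun t ht ↦ h.abs_error_right_le t (hsub ht) }

-- `nullForm s` is a left eigenvector of the residue matrix, with eigenvalue `1 - s`.
lemma hasDerivAt_nullForm {s : ℝ} (h : IsDarbouxSystem lam C τ X Y Z e₁ e₂)
    (hs : lam = s - s ^ 2 / 2) : ∀ t ∈ Ioo 0 τ, HasDerivAt (fun t ↦ nullForm s (X t) (Y t) (Z t))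
      ((1 - s) * nullForm s (X t) (Y t) (Z t) / t + (e₂ t - s * e₁ t)) t := by
  intro t ht
  refine (((h.hasDerivAt_right t ht).sub ((h.hasDerivAt_middle t ht).const_mul s)).add
    ((h.hasDerivAt_left t ht).const_mul (s ^ 2 / 2))).congr_deriv ?_
  have := ht.1.ne'
  rw [hs, nullForm]
  field_simp
  ring

lemma abs_error_sub_le (h : IsDarbouxSystem lam C τ X Y Z e₁ e₂) (s : ℝ) :
    ∀ t ∈ Ioo 0 τ, |e₂ t - s * e₁ t| ≤ (1 + |s|) * C * (X t + Z t) := by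
  intro t ht
  calc |e₂ t - s * e₁ t| ≤ |e₂ t| + |s * e₁ t| := abs_sub _ _
    _ = |e₂ t| + |s| * |e₁ t| := by rw [abs_mul]
    _ ≤ C * (X t + Z t) + |s| * (C * (X t + Z t)) :=
      add_le_add (h.abs_error_right_le t ht)
        (mul_le_mul_of_nonneg_left (h.abs_error_middle_le t ht) (abs_nonneg s))
    _ = (1 + |s|) * C * (X t + Z t) := by ring

lemma const_nonneg (h : IsDarbouxSystem lam C τ X Y Z e₁ e₂) (hτ : 0 < τ) : 0 ≤ C := by
  obtain ⟨t, ht⟩ := nonempty_Ioo.2 hτ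
  exact nonneg_of_mul_nonneg_left ((abs_nonneg _).trans (h.abs_error_right_le t ht))
    (h.add_pos t ht)

lemma exists_tendsto_nullForm_div_of_pos {μ : ℝ} (h : IsDarbouxSystem lam C τ X Y Z e₁ e₂)
    (hτ : 0 < τ) (hμ : 0 < μ) (hlam : 2 * lam = 1 - μ ^ 2) :
    ∃ s : ℝ, (s = 1 - μ ∨ s = 1 + μ) ∧
      Tendsto (fun t ↦ nullForm s (X t) (Y t) (Z t) / (X t + Z t)) (𝓝[>] 0) (𝓝 0) := by
  set A := fun t ↦ nullForm (1 - μ) (X t) (Y t) (Z t)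
  set B := fun t ↦ nullForm (1 + μ) (X t) (Y t) (Z t)
  have hA : ∀ t ∈ Ioo 0 τ, 0 ≤ A t := fun t ht ↦ (h.inLightCone t ht).nullForm_nonneg _
  have hB : ∀ t ∈ Ioo 0 τ, 0 ≤ B t := fun t ht ↦ (h.inLightCone t ht).nullForm_nonneg _
  have hsum : ∀ t ∈ Ioo 0 τ, X t + Z t ≤ (3 + μ ^ 2) / (2 * μ ^ 2) * (A t + B t) := by
    intro t ht
    rw [div_mul_eq_mul_div, le_div_iff₀' (by positivity)]
    exact (h.inLightCone t ht).mul_add_le_nullForm_add_nullForm μ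
  have hAB : ∀ t ∈ Ioo 0 τ, 0 < A t + B t := fun t ht ↦
    pos_of_mul_pos_right ((h.add_pos t ht).trans_le (hsum t ht)) (by positivity)
  have herror : ∀ s, |s| ≤ 1 + μ → ∀ t ∈ Ioo 0 τ,
      |e₂ t - s * e₁ t| ≤ (2 + μ) * C * ((3 + μ ^ 2) / (2 * μ ^ 2)) * (A t + B t) := by
    intro s hs t ht
    have hC := h.const_nonneg hτ
    have := (h.add_pos t ht).le
    calc |e₂ t - s * e₁ t| ≤ (1 + |s|) * C * (X t + Z t) := h.abs_error_sub_le s t ht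
      _ ≤ (1 + (1 + μ)) * C * ((3 + μ ^ 2) / (2 * μ ^ 2) * (A t + B t)) := by
        gcongr
        exact hsum t ht
      _ = (2 + μ) * C * ((3 + μ ^ 2) / (2 * μ ^ 2)) * (A t + B t) := by ring
  have hcompare : ∀ f : ℝ → ℝ, (∀ t ∈ Ioo 0 τ, 0 ≤ f t) →
      Tendsto (fun t ↦ f t / (A t + B t)) (𝓝[>] 0) (𝓝 0) →
      Tendsto (fun t ↦ f t / (X t + Z t)) (𝓝[>] 0) (𝓝 0) := by
    intro f hf hlim
    refine tendsto_div_zero_of_le_mul (K := 2 + (1 - μ) ^ 2 + (2 + (1 + μ) ^ 2)) ?_ hlim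
    filter_upwards [Ioo_mem_nhdsGT hτ] with t ht
    refine ⟨hf t ht, hAB t ht, h.add_pos t ht, ?_⟩
    linarith [(h.inLightCone t ht).nullForm_le (1 - μ), (h.inLightCone t ht).nullForm_le (1 + μ)]
  rcases tendsto_ratio_zero_or_of_eigenvalue_gap hτ (α := 1 - (1 - μ)) (β := 1 - (1 + μ))
    (by linarith) hA hB hAB
    (h.hasDerivAt_nullForm (by linarith)) (h.hasDerivAt_nullForm (by linarith))
    (herror _ (abs_le.2 ⟨by linarith, by linarith⟩))
    (herror _ (abs_of_pos (by linarith)).le)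
    with hlim | hlim
  · exact ⟨1 - μ, Or.inl rfl, hcompare A hA hlim⟩
  · exact ⟨1 + μ, Or.inr rfl, hcompare B hB hlim⟩

lemma exists_tendsto_nullForm_div_of_lt (h : IsDarbouxSystem lam C τ X Y Z e₁ e₂) (hτ : 0 < τ)
    (hlam₀ : lam ≠ 0) (hlam : 2 * lam < 1) :
    ∃ s ≠ 0, Tendsto (fun t ↦ nullForm s (X t) (Y t) (Z t) / (X t + Z t)) (𝓝[>] 0) (𝓝 0) := by
  have hμ : √(1 - 2 * lam) ^ 2 = 1 - 2 * lam := Real.sq_sqrt (by linarith)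
  obtain ⟨s, hs, hlim⟩ := h.exists_tendsto_nullForm_div_of_pos hτ
    (Real.sqrt_pos.2 (sub_pos.2 hlam)) (by linarith)
  refine ⟨s, fun h₀ ↦ hlam₀ ?_, hlim⟩
  rcases hs with rfl | rfl <;> nlinarith

lemma mul_error_le_mul_unwoundSum (h : IsDarbouxSystem lam C τ X Y Z e₁ e₂)
    (hlog : ∀ t ∈ Ioo 0 τ, √t * (2 + Real.log t ^ 2) ^ 2 ≤ 1) :
    ∀ t ∈ Ioo 0 τ, (2 + Real.log t ^ 2) * (C * (X t + Z t)) ≤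
      3 * C * (√t)⁻¹ * unwoundSum (Real.log t) (X t) (Y t) (Z t) := by
  intro t ht
  have hC := h.const_nonneg (ht.1.trans ht.2)
  have hcone := (h.inLightCone t ht).add_le_unwoundSum (Real.log t)
  have hU : 0 < unwoundSum (Real.log t) (X t) (Y t) (Z t) :=
    pos_of_mul_pos_right ((h.add_pos t ht).trans_le hcone) (by positivity)
  have hinv : (2 + Real.log t ^ 2) ^ 2 ≤ (√t)⁻¹ := by
    rw [← one_div, le_div_iff₀' (Real.sqrt_pos.2 ht.1)]
    exact hlog t ht
  calc (2 + Real.log t ^ 2) * (C * (X t + Z t))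
      ≤ (2 + Real.log t ^ 2) * (C *
          (3 * (2 + Real.log t ^ 2) * unwoundSum (Real.log t) (X t) (Y t) (Z t))) := by gcongr
    _ = 3 * C * (2 + Real.log t ^ 2) ^ 2 * unwoundSum (Real.log t) (X t) (Y t) (Z t) := by ring
    _ ≤ 3 * C * (√t)⁻¹ * unwoundSum (Real.log t) (X t) (Y t) (Z t) := by gcongr

lemma hasDerivAt_unwoundSum (h : IsDarbouxSystem (1 / 2) C τ X Y Z e₁ e₂) :
    ∀ t ∈ Ioo 0 τ, HasDerivAt (fun t ↦ unwoundSum (Real.log t) (X t) (Y t) (Z t))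
      ((1 + Real.log t ^ 2 / 2) * (e₂ t - e₁ t) - Real.log t * e₁ t) t := by
  intro t ht
  have hA := h.hasDerivAt_nullForm (s := 1) (by norm_num) t ht
  have hX := h.hasDerivAt_left t ht
  have hl := Real.hasDerivAt_log ht.1.ne'
  refine (hA.add ((hX.sub (hl.mul ((h.hasDerivAt_middle t ht).sub hX))).add
    (((hl.pow 2).div_const 2).mul hA))).congr_deriv ?_
  have := ht.1.ne'
  simp only [nullForm, Pi.sub_apply, Pi.pow_apply]
  field_simp
  ring

lemma exists_pos_tendsto_unwoundSum (h : IsDarbouxSystem (1 / 2) C τ X Y Z e₁ e₂) (hτ : 0 < τ)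
    (hlog : ∀ t ∈ Ioo 0 τ, √t * (2 + Real.log t ^ 2) ^ 2 ≤ 1) :
    ∃ L > 0, Tendsto (fun t ↦ unwoundSum (Real.log t) (X t) (Y t) (Z t)) (𝓝[>] 0) (𝓝 L) := by
  refine exists_pos_tendsto_of_abs_deriv_le_mul hτ (fun t ht ↦ ?_) h.hasDerivAt_unwoundSum
    (fun t ht ↦ (Real.hasDerivAt_sqrt ht.1.ne').const_mul (12 * C)) (fun t ht ↦ ?_)
    (tendsto_const_mul_sqrt_nhdsGT_zero (12 * C))
  · exact pos_of_mul_pos_right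
      ((h.add_pos t ht).trans_le ((h.inLightCone t ht).add_le_unwoundSum _)) (by positivity)
  · set l := Real.log t
    have hl : |l| ≤ 2 + l ^ 2 := abs_le.2 ⟨by nlinarith, by nlinarith⟩
    calc |(1 + l ^ 2 / 2) * (e₂ t - e₁ t) - l * e₁ t|
        ≤ |(1 + l ^ 2 / 2) * (e₂ t - e₁ t)| + |l * e₁ t| := abs_sub _ _
      _ = (1 + l ^ 2 / 2) * |e₂ t - e₁ t| + |l| * |e₁ t| := by
        rw [abs_mul, abs_mul, abs_of_pos (by positivity)]
      _ ≤ (1 + l ^ 2 / 2) * (2 * (C * (X t + Z t))) + (2 + l ^ 2) * (C * (X t + Z t)) := by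
        gcongr
        · linarith [abs_sub (e₂ t) (e₁ t), h.abs_error_middle_le t ht, h.abs_error_right_le t ht]
        · exact h.abs_error_middle_le t ht
      _ = 2 * ((2 + l ^ 2) * (C * (X t + Z t))) := by ring
      _ ≤ 2 * (3 * C * (√t)⁻¹ * unwoundSum l (X t) (Y t) (Z t)) :=
        mul_le_mul_of_nonneg_left (h.mul_error_le_mul_unwoundSum hlog t ht) zero_le_two
      _ = 12 * C * (1 / (2 * √t)) * unwoundSum l (X t) (Y t) (Z t) := by
        field_simp
        ring

lemma exists_tendsto_nullForm_one {M : ℝ} (h : IsDarbouxSystem (1 / 2) C τ X Y Z e₁ e₂)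
    (hτ : 0 < τ) (hlog : ∀ t ∈ Ioo 0 τ, √t * (2 + Real.log t ^ 2) ^ 2 ≤ 1)
    (hM : ∀ t ∈ Ioo 0 τ, unwoundSum (Real.log t) (X t) (Y t) (Z t) ≤ M) :
    ∃ a, Tendsto (fun t ↦ nullForm 1 (X t) (Y t) (Z t)) (𝓝[>] 0) (𝓝 a) ∧
      ∀ t ∈ Ioo 0 τ, |nullForm 1 (X t) (Y t) (Z t) - a| ≤ 6 * C * M * √t := by
  refine exists_tendsto_of_norm_deriv_le hτ (h.hasDerivAt_nullForm (by norm_num))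
    (fun t ht ↦ (Real.hasDerivAt_sqrt ht.1.ne').const_mul (6 * C * M)) (fun t ht ↦ ?_)
    (tendsto_const_mul_sqrt_nhdsGT_zero (6 * C * M))
  have hC := h.const_nonneg hτ
  have hCw : 0 ≤ C * (X t + Z t) := (abs_nonneg _).trans (h.abs_error_right_le t ht)
  calc ‖(1 - 1) * nullForm 1 (X t) (Y t) (Z t) / t + (e₂ t - 1 * e₁ t)‖
      = |e₂ t - 1 * e₁ t| := by rw [Real.norm_eq_abs, sub_self, zero_mul, zero_div, zero_add]
    _ ≤ (1 + |1|) * C * (X t + Z t) := h.abs_error_sub_le 1 t ht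
    _ = 2 * (C * (X t + Z t)) := by rw [abs_one]; ring
    _ ≤ (2 + Real.log t ^ 2) * (C * (X t + Z t)) := by
      gcongr
      exact le_add_of_nonneg_right (sq_nonneg _)
    _ ≤ 3 * C * (√t)⁻¹ * unwoundSum (Real.log t) (X t) (Y t) (Z t) :=
      h.mul_error_le_mul_unwoundSum hlog t ht
    _ ≤ 3 * C * (√t)⁻¹ * M := by
      gcongr
      exact hM t ht
    _ = 6 * C * M * (1 / (2 * √t)) := by
      field_simp
      ring

lemma tendsto_nullForm_one_div_of_tendsto_pos {a L : ℝ}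
    (h : IsDarbouxSystem (1 / 2) C τ X Y Z e₁ e₂) (hτ : 0 < τ) (ha : 0 < a)
    (hA : Tendsto (fun t ↦ nullForm 1 (X t) (Y t) (Z t)) (𝓝[>] 0) (𝓝 a))
    (hL : Tendsto (fun t ↦ unwoundSum (Real.log t) (X t) (Y t) (Z t)) (𝓝[>] 0) (𝓝 L)) :
    Tendsto (fun t ↦ nullForm 1 (X t) (Y t) (Z t) / (X t + Z t)) (𝓝[>] 0) (𝓝 0) := by
  refine hA.div_atTop ?_
  have hlog : Tendsto (fun t ↦ -Real.log t) (𝓝[>] 0) atTop :=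
    tendsto_neg_atBot_atTop.comp Real.tendsto_log_nhdsGT_zero
  have hlim : Tendsto (fun t ↦ (-Real.log t * nullForm 1 (X t) (Y t) (Z t) +
      -unwoundSum (Real.log t) (X t) (Y t) (Z t)) / 3) (𝓝[>] 0) atTop :=
    ((hlog.atTop_mul_pos ha hA).atTop_add hL.neg).atTop_div_const three_pos
  refine tendsto_atTop_mono' _ ?_ hlim
  filter_upwards [Ioo_mem_nhdsGT hτ] with t ht
  linarith [(h.inLightCone t ht).neg_mul_nullForm_le (Real.log t)]

lemma tendsto_nullForm_one_div_of_le_sqrt {K L : ℝ}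
    (h : IsDarbouxSystem (1 / 2) C τ X Y Z e₁ e₂) (hτ : 0 < τ) (hL₀ : 0 < L)
    (hA : ∀ t ∈ Ioo 0 τ, nullForm 1 (X t) (Y t) (Z t) ≤ K * √t)
    (hL : Tendsto (fun t ↦ unwoundSum (Real.log t) (X t) (Y t) (Z t)) (𝓝[>] 0) (𝓝 L)) :
    Tendsto (fun t ↦ nullForm 1 (X t) (Y t) (Z t) / (X t + Z t)) (𝓝[>] 0) (𝓝 0) := by
  have hlim : Tendsto (fun t ↦ 3 * K * (√t * (2 + Real.log t ^ 2) ^ 2) /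
      unwoundSum (Real.log t) (X t) (Y t) (Z t)) (𝓝[>] 0) (𝓝 0) := by
    have := (tendsto_sqrt_mul_two_add_log_sq_sq.const_mul (3 * K)).div hL hL₀.ne'
    rwa [mul_zero, zero_div] at this
  refine tendsto_of_tendsto_of_tendsto_of_le_of_le' tendsto_const_nhds hlim ?_ ?_
  · filter_upwards [Ioo_mem_nhdsGT hτ] with t ht
    exact div_nonneg ((h.inLightCone t ht).nullForm_nonneg 1) (h.add_pos t ht).le
  · filter_upwards [Ioo_mem_nhdsGT hτ, hL.eventually (lt_mem_nhds hL₀)] with t ht hU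
    have hA₀ := (h.inLightCone t ht).nullForm_nonneg 1
    have hw := h.add_pos t ht
    have hl : 2 + Real.log t ^ 2 ≤ (2 + Real.log t ^ 2) ^ 2 :=
      le_self_pow₀ (by linarith [sq_nonneg (Real.log t)]) two_ne_zero
    rw [div_le_div_iff₀ hw hU]
    calc nullForm 1 (X t) (Y t) (Z t) * unwoundSum (Real.log t) (X t) (Y t) (Z t)
        ≤ K * √t * (3 * (2 + Real.log t ^ 2) ^ 2 * (X t + Z t)) := by
          refine mul_le_mul (hA t ht) ?_ hU.le (hA₀.trans (hA t ht))
          exact ((h.inLightCone t ht).unwoundSum_le _).trans (by gcongr)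
      _ = 3 * K * (√t * (2 + Real.log t ^ 2) ^ 2) * (X t + Z t) := by ring

-- For `lam = 1 / 2` the residue matrix `N` is nilpotent; undoing the logarithmic growth factor
-- `exp (log t • N)` leaves an integrable perturbation.
lemma tendsto_nullForm_one_div (h : IsDarbouxSystem (1 / 2) C τ X Y Z e₁ e₂) (hτ : 0 < τ) :
    Tendsto (fun t ↦ nullForm 1 (X t) (Y t) (Z t) / (X t + Z t)) (𝓝[>] 0) (𝓝 0) := by
  obtain ⟨σ, hσ, hlog⟩ := exists_forall_mem_Ioo_of_eventually_nhdsGT hτ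
    (tendsto_sqrt_mul_two_add_log_sq_sq.eventually (ge_mem_nhds one_pos))
  obtain ⟨L, hL₀, hL⟩ := (h.mono hσ.2).exists_pos_tendsto_unwoundSum hσ.1 hlog
  obtain ⟨ρ, hρ, hM⟩ := exists_forall_mem_Ioo_of_eventually_nhdsGT hσ.1
    (hL.eventually (ge_mem_nhds (lt_add_one L)))
  have hsys := h.mono (hρ.2.trans hσ.2)
  obtain ⟨a, hA, hAa⟩ := hsys.exists_tendsto_nullForm_one hρ.1
    (fun t ht ↦ hlog t ⟨ht.1, ht.2.trans_le hρ.2⟩) hM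
  have ha : 0 ≤ a := ge_of_tendsto hA <| by
    filter_upwards [Ioo_mem_nhdsGT hρ.1] with t ht using (hsys.inLightCone t ht).nullForm_nonneg 1
  rcases ha.eq_or_lt with rfl | ha
  · refine hsys.tendsto_nullForm_one_div_of_le_sqrt (K := 6 * C * (L + 1)) hρ.1 hL₀
      (fun t ht ↦ ?_) hL
    simpa only [sub_zero] using (le_abs_self _).trans (hAa t ht)
  · exact hsys.tendsto_nullForm_one_div_of_tendsto_pos hρ.1 ha hA hL

lemma exists_tendsto_nullForm_div (h : IsDarbouxSystem lam C τ X Y Z e₁ e₂) (hτ : 0 < τ)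
    (hlam₀ : lam ≠ 0) (hlam : 2 * lam ≤ 1) :
    ∃ s ≠ 0, Tendsto (fun t ↦ nullForm s (X t) (Y t) (Z t) / (X t + Z t)) (𝓝[>] 0) (𝓝 0) := by
  rcases hlam.lt_or_eq with hlt | heq
  · exact h.exists_tendsto_nullForm_div_of_lt hτ hlam₀ hlt
  · obtain rfl : lam = 1 / 2 := by linarith
    exact ⟨1, one_ne_zero, h.tendsto_nullForm_one_div hτ⟩

lemma exists_eventually_mul_left_le_right (h : IsDarbouxSystem lam C τ X Y Z e₁ e₂) (hτ : 0 < τ)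
    (hlam₀ : lam ≠ 0) (hlam : 2 * lam ≤ 1) : ∃ δ > 0, ∀ᶠ t in 𝓝[>] 0, δ * X t ≤ Z t := by
  obtain ⟨s, hs, hlim⟩ := h.exists_tendsto_nullForm_div hτ hlam₀ hlam
  have hη : 0 < s ^ 2 / 8 := by positivity
  refine ⟨s ^ 2 / 8 / (1 + s ^ 2 / 8), by positivity, ?_⟩
  filter_upwards [Ioo_mem_nhdsGT hτ, hlim.eventually (ge_mem_nhds hη)] with t ht hsmall
  rw [div_le_iff₀ (h.add_pos t ht)] at hsmall
  rw [div_mul_eq_mul_div, div_le_iff₀ (by positivity)]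
  linarith [(h.inLightCone t ht).sq_div_four_mul_le s]

end IsDarbouxSystem

/-! ### The Minkowski inner product -/

lemma abs_mink_le (x y : E n) : |mink x y| ≤ ‖x‖ * ‖y‖ := by
  apply abs_le_of_sq_le_sq _ (by positivity)
  rw [mul_pow, EuclideanSpace.norm_sq_eq, EuclideanSpace.norm_sq_eq]
  refine (Finset.sum_mul_sq_le_sq_mul_sq _ _ _).trans_eq ?_
  congr 1 <;> refine Finset.sum_congr rfl fun i _ ↦ ?_
  · split_ifs <;> simp
  · simp

lemma isBoundedBilinearMap_mink : IsBoundedBilinearMap ℝ fun p : E n × E n ↦ mink p.1 p.2 where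
  add_left := mink_add_left
  smul_left := mink_smul_left
  add_right := mink_add_right
  smul_right c x y := mink_smul_right x c y
  bound := ⟨1, one_pos, fun x y ↦ by simpa only [one_mul, Real.norm_eq_abs] using abs_mink_le x y⟩

lemma mink_sub_left (x y v : E n) : mink (x - y) v = mink x v - mink y v :=
  isBoundedBilinearMap_mink.map_sub_left

lemma mink_sub_right (v x y : E n) : mink v (x - y) = mink v x - mink v y :=
  isBoundedBilinearMap_mink.map_sub_right

lemma mink_zero_right (v : E n) : mink v 0 = 0 := by
  simpa only [zero_smul, zero_mul] using mink_smul_right v 0 0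

lemma mink_neg_right (v x : E n) : mink v (-x) = -mink v x := by
  simpa only [neg_smul, one_smul, neg_mul, one_mul] using mink_smul_right v (-1) x

lemma hasDerivAt_mink {f g : ℝ → E n} {f' g' : E n} {t : ℝ} (hf : HasDerivAt f f' t)
    (hg : HasDerivAt g g' t) :
    HasDerivAt (fun s ↦ mink (f s) (g s)) (mink (f t) g' + mink f' (g t)) t :=
  HasFDerivAt.comp_hasDerivAt (f := fun s ↦ (f s, g s)) t
    (isBoundedBilinearMap_mink.hasFDerivAt (f t, g t)) (hf.prodMk hg)

lemma mink_eq_sum_castSucc_sub (x y : E n) : mink x y =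
    ∑ i : Fin (n + 1), x i.castSucc * y i.castSucc -
      x (Fin.last (n + 1)) * y (Fin.last (n + 1)) := by
  simp only [mink, Fin.sum_univ_castSucc (n := n + 1), (Fin.castSucc_lt_last _).ne, if_true,
    if_false, one_mul, neg_mul, sub_eq_add_neg]

lemma neg_mink_self_mul_norm_sq_le_of_mink_eq_zero {T w : E n}
    (hw : mink T w = 0) : -mink T T * ‖w‖ ^ 2 ≤ ‖T‖ ^ 2 * mink w w := by
  have hcs := Finset.sum_mul_sq_le_sq_mul_sq Finset.univ
    (fun i : Fin (n + 1) ↦ T i.castSucc) (fun i ↦ w i.castSucc)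
  rw [EuclideanSpace.norm_sq_eq, EuclideanSpace.norm_sq_eq]
  simp only [mink_eq_sum_castSucc_sub, Fin.sum_univ_castSucc (n := n + 1), Real.norm_eq_abs,
    sq_abs, ← pow_two] at hw ⊢
  set a := T (Fin.last (n + 1))
  set b := w (Fin.last (n + 1))
  set V := ∑ i : Fin (n + 1), T i.castSucc ^ 2
  set W := ∑ i : Fin (n + 1), w i.castSucc ^ 2
  rw [sub_eq_zero.1 hw, mul_pow] at hcs
  linarith

lemma mink_self_sq_mul_norm_sq_le {T : E n} (hT : mink T T < 0) (u : E n) :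
    mink T T ^ 2 * ‖u‖ ^ 2 ≤ 2 * ‖T‖ ^ 2 * (2 * mink T u ^ 2 - mink T T * mink u u) := by
  set m := -mink T T
  set v := m • u + mink T u • T
  have hv : mink T v = 0 := by
    simp only [v, m, mink_add_right, mink_smul_right]
    ring
  have hvv : mink v v = m * (m * mink u u + mink T u ^ 2) := by
    simp only [v, m, mink_add_left, mink_add_right, mink_smul_left, mink_smul_right, mink_comm u T]
    ring
  have hm : 0 < m := neg_pos.2 hT
  have hnorm : ‖v‖ ^ 2 ≤ ‖T‖ ^ 2 * (m * mink u u + mink T u ^ 2) := by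
    have := neg_mink_self_mul_norm_sq_le_of_mink_eq_zero hv
    rw [hvv] at this
    exact le_of_mul_le_mul_left (by linarith) hm
  have hu : ‖m • u‖ ≤ ‖v‖ + ‖mink T u • T‖ := by
    simpa only [v, add_sub_cancel_right] using norm_sub_le v (mink T u • T)
  calc mink T T ^ 2 * ‖u‖ ^ 2 = ‖m • u‖ ^ 2 := by
        rw [norm_smul, mul_pow, Real.norm_eq_abs, sq_abs, neg_sq]
    _ ≤ (‖v‖ + ‖mink T u • T‖) ^ 2 := by gcongr
    _ ≤ 2 * (‖v‖ ^ 2 + ‖mink T u • T‖ ^ 2) := add_sq_le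
    _ = 2 * (‖v‖ ^ 2 + mink T u ^ 2 * ‖T‖ ^ 2) := by
        rw [norm_smul, mul_pow, Real.norm_eq_abs, sq_abs]
    _ ≤ 2 * ‖T‖ ^ 2 * (2 * mink T u ^ 2 - mink T T * mink u u) := by linarith

lemma neg_mink_self_mul_norm_le_of_null {T u : E n} (hT : mink T T < 0) (hu : mink u u = 0) :
    -mink T T * ‖u‖ ≤ 2 * ‖T‖ * |mink T u| := by
  have := mink_self_sq_mul_norm_sq_le hT u
  refine (abs_le_of_sq_le_sq' ?_ (by positivity)).2
  rw [hu] at this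
  rw [mul_pow, mul_pow, mul_pow, sq_abs, neg_sq]
  linarith

lemma tendsto_zero_of_tendsto_mink {ι : Type*} {l : Filter ι} {T u : ι → E n} {T₀ : E n}
    (hT : Tendsto T l (𝓝 T₀)) (hT₀ : mink T₀ T₀ < 0)
    (hTu : Tendsto (fun i ↦ mink (T i) (u i)) l (𝓝 0))
    (huu : Tendsto (fun i ↦ mink (u i) (u i)) l (𝓝 0)) : Tendsto u l (𝓝 0) := by
  have hTT : Tendsto (fun i ↦ mink (T i) (T i)) l (𝓝 (mink T₀ T₀)) :=
    Tendsto.comp (f := fun i ↦ (T i, T i))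
      (isBoundedBilinearMap_mink.continuous.tendsto (T₀, T₀)) (hT.prodMk_nhds hT)
  have herror : Tendsto (fun i ↦ 2 * mink (T i) (u i) ^ 2 - mink (T i) (T i) * mink (u i) (u i))
      l (𝓝 0) := by
    simpa using ((hTu.pow 2).const_mul 2).sub (hTT.mul huu)
  have hbound : Tendsto (fun i ↦ 2 * ‖T i‖ ^ 2 *
      (2 * mink (T i) (u i) ^ 2 - mink (T i) (T i) * mink (u i) (u i)) / mink (T i) (T i) ^ 2)
      l (𝓝 0) := by
    have := (((hT.norm.pow 2).const_mul 2).mul herror).div (hTT.pow 2) (pow_ne_zero 2 hT₀.ne)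
    rwa [mul_zero, zero_div] at this
  have hsq : Tendsto (fun i ↦ ‖u i‖ ^ 2) l (𝓝 0) := by
    refine tendsto_of_tendsto_of_tendsto_of_le_of_le' tendsto_const_nhds hbound
      (Eventually.of_forall fun i ↦ sq_nonneg _) ?_
    filter_upwards [hTT.eventually (gt_mem_nhds hT₀)] with i hi
    rw [le_div_iff₀' (sq_pos_of_neg hi)]
    exact mink_self_sq_mul_norm_sq_le hi (u i)
  rw [tendsto_zero_iff_norm_tendsto_zero]
  simpa using hsq.sqrt

/-! ### Null frames -/

/-- A basis of a Lorentzian three-space: null vectors `c` and `N` with `⟨N, c⟩ = -1`, and a unit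
vector `e` orthogonal to both. -/
structure IsNullFrame (c e N : E n) : Prop where
  left_self : mink c c = 0
  left_middle : mink c e = 0
  middle_self : mink e e = 1
  right_left : mink N c = -1
  right_middle : mink N e = 0
  right_self : mink N N = 0

namespace IsNullFrame

variable {c e N u : E n}

lemma mink_add_self (h : IsNullFrame c e N) : mink (c + N) (c + N) = -2 := by
  simp only [mink_add_left, mink_add_right, mink_comm c N, h.left_self, h.right_left, h.right_self]
  norm_num

lemma mink_add_self_neg (h : IsNullFrame c e N) : mink (c + N) (c + N) < 0 := by
  rw [h.mink_add_self]
  norm_num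

-- Bessel's inequality: the component of `u` orthogonal to the frame is spacelike.
lemma sq_le_of_null (h : IsNullFrame c e N) (hu : mink u u = 0) :
    mink e u ^ 2 ≤ 2 * mink c u * mink N u := by
  set w := u + mink N u • c - mink e u • e + mink c u • N
  have hw : mink (c + N) w = 0 := by
    simp only [w, mink_add_left, mink_add_right, mink_sub_right, mink_smul_right, mink_comm c N,
      h.left_self, h.left_middle, h.right_left, h.right_middle, h.right_self]
    ring
  have hww : mink w w = 2 * mink c u * mink N u - mink e u ^ 2 := by
    simp only [w, mink_add_left, mink_add_right, mink_sub_left, mink_sub_right, mink_smul_left,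
      mink_smul_right, mink_comm c N, mink_comm e c, mink_comm e N, mink_comm u c, mink_comm u e,
      mink_comm u N, hu, h.left_self, h.left_middle, h.middle_self, h.right_left, h.right_middle,
      h.right_self]
    ring
  have hT : c + N ≠ 0 := fun h₀ ↦ by
    simpa [h₀, mink_zero_right] using h.mink_add_self_neg
  have hbound := neg_mink_self_mul_norm_sq_le_of_mink_eq_zero hw
  rw [h.mink_add_self] at hbound
  have : 0 ≤ mink w w := nonneg_of_mul_nonneg_right (a := ‖c + N‖ ^ 2)
    (le_trans (by positivity) hbound) (by positivity)
  linarith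

lemma norm_le_of_null (h : IsNullFrame c e N) (hu : mink u u = 0) :
    ‖u‖ ≤ ‖c + N‖ * |mink c u + mink N u| := by
  have := neg_mink_self_mul_norm_le_of_null h.mink_add_self_neg hu
  rw [h.mink_add_self, mink_add_left] at this
  linarith

lemma abs_mink_le_of_null (h : IsNullFrame c e N) (hu : mink u u = 0) (v : E n) :
    |mink v u| ≤ ‖v‖ * ‖c + N‖ * |mink c u + mink N u| :=
  calc |mink v u| ≤ ‖v‖ * ‖u‖ := abs_mink_le v u
    _ ≤ ‖v‖ * (‖c + N‖ * |mink c u + mink N u|) := by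
      gcongr
      exact h.norm_le_of_null hu
    _ = ‖v‖ * ‖c + N‖ * |mink c u + mink N u| := by ring

lemma inLightCone_of_null (h : IsNullFrame c e N) (hu : mink u u = 0)
    (hpos : 0 < mink c u + mink N u) : InLightCone (mink c u) (mink e u) (mink N u) := by
  have hsq := h.sq_le_of_null hu
  have hmul : 0 ≤ mink c u * mink N u := by nlinarith [sq_nonneg (mink e u)]
  rcases mul_nonneg_iff.1 hmul with ⟨hx, hz⟩ | ⟨hx, hz⟩
  · exact ⟨hx, hz, hsq⟩
  · linarith

end IsNullFrame

/-! ### Flat lifts and their Darboux transforms -/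

/-- The curve `c` is a light-cone lift, on `s`, of a curve in the conformal sphere and induces the
flat metric `dt ^ 2` on it. -/
structure IsFlatLift (c : ℝ → E n) (s : Set ℝ) : Prop where
  contDiffOn : ContDiffOn ℝ 3 c s
  null : ∀ t ∈ s, mink (c t) (c t) = 0
  unit_speed : ∀ t ∈ s, mink (deriv c t) (deriv c t) = 1

/-- The curvature function of a flat lift: the multiple of `c` to be added to `c''` in order to make
it null. -/
def lightConeCurvature (c : ℝ → E n) (t : ℝ) : ℝ := mink (deriv (deriv c) t) (deriv (deriv c) t) / 2

/-- The null vector field which completes a flat lift and its derivative to a null frame. -/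
def nullNormal (c : ℝ → E n) (t : ℝ) : E n := deriv (deriv c) t + lightConeCurvature c t • c t

lemma eq_zero_of_hasDerivAt_of_eqOn_const {s : Set ℝ} {f : ℝ → ℝ} {k f' t : ℝ} (hs : IsOpen s)
    (ht : t ∈ s) (h : ∀ t ∈ s, f t = k) (hf : HasDerivAt f f' t) : f' = 0 :=
  hf.unique ((hasDerivAt_const t k).congr_of_eventuallyEq (eventually_of_mem (hs.mem_nhds ht) h))

namespace IsFlatLift

variable {c : ℝ → E n} {s : Set ℝ} {t : ℝ}

lemma contDiffOn_deriv (hc : IsFlatLift c s) (hs : IsOpen s) : ContDiffOn ℝ 2 (deriv c) s :=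
  hc.contDiffOn.deriv_of_isOpen hs (by norm_num)

lemma contDiffOn_deriv_deriv (hc : IsFlatLift c s) (hs : IsOpen s) :
    ContDiffOn ℝ 1 (deriv (deriv c)) s :=
  (hc.contDiffOn_deriv hs).deriv_of_isOpen hs (by norm_num)

lemma contDiffOn_lightConeCurvature (hc : IsFlatLift c s) (hs : IsOpen s) :
    ContDiffOn ℝ 1 (lightConeCurvature c) s :=
  (isBoundedBilinearMap_mink.contDiff.comp_contDiffOn
    ((hc.contDiffOn_deriv_deriv hs).prodMk (hc.contDiffOn_deriv_deriv hs))).div_const 2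

lemma contDiffOn_nullNormal (hc : IsFlatLift c s) (hs : IsOpen s) :
    ContDiffOn ℝ 1 (nullNormal c) s :=
  (hc.contDiffOn_deriv_deriv hs).add
    ((hc.contDiffOn_lightConeCurvature hs).smul (hc.contDiffOn.of_le (by norm_num)))

lemma hasDerivAt (hc : IsFlatLift c s) (hs : IsOpen s) (ht : t ∈ s) :
    HasDerivAt c (deriv c t) t :=
  ((hc.contDiffOn.contDiffAt (hs.mem_nhds ht)).differentiableAt (by norm_num)).hasDerivAt

lemma hasDerivAt_deriv (hc : IsFlatLift c s) (hs : IsOpen s) (ht : t ∈ s) :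
    HasDerivAt (deriv c) (deriv (deriv c) t) t :=
  (((hc.contDiffOn_deriv hs).contDiffAt (hs.mem_nhds ht)).differentiableAt
    (by norm_num)).hasDerivAt

lemma hasDerivAt_nullNormal (hc : IsFlatLift c s) (hs : IsOpen s) (ht : t ∈ s) :
    HasDerivAt (nullNormal c) (deriv (nullNormal c) t) t :=
  (((hc.contDiffOn_nullNormal hs).contDiffAt (hs.mem_nhds ht)).differentiableAt
    (by norm_num)).hasDerivAt

lemma isNullFrame (hc : IsFlatLift c s) (hs : IsOpen s) (ht : t ∈ s) :
    IsNullFrame (c t) (deriv c t) (nullNormal c t) := by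
  have h₀₁ : ∀ t ∈ s, mink (c t) (deriv c t) = 0 := fun t ht ↦ by
    have := eq_zero_of_hasDerivAt_of_eqOn_const hs ht hc.null
      (hasDerivAt_mink (hc.hasDerivAt hs ht) (hc.hasDerivAt hs ht))
    rw [mink_comm (deriv c t)] at this
    linarith
  have h₂₀ : mink (deriv (deriv c) t) (c t) = -1 := by
    have := eq_zero_of_hasDerivAt_of_eqOn_const hs ht h₀₁
      (hasDerivAt_mink (hc.hasDerivAt hs ht) (hc.hasDerivAt_deriv hs ht))
    rw [hc.unit_speed t ht, mink_comm] at this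
    linarith
  have h₂₁ : mink (deriv (deriv c) t) (deriv c t) = 0 := by
    have := eq_zero_of_hasDerivAt_of_eqOn_const hs ht hc.unit_speed
      (hasDerivAt_mink (hc.hasDerivAt_deriv hs ht) (hc.hasDerivAt_deriv hs ht))
    rw [mink_comm (deriv c t)] at this
    linarith
  refine ⟨hc.null t ht, h₀₁ t ht, hc.unit_speed t ht, ?_, ?_, ?_⟩ <;>
    simp only [nullNormal, lightConeCurvature, mink_add_left, mink_add_right, mink_smul_left,
      mink_smul_right, mink_comm (c t) (deriv (deriv c) t), hc.null t ht, h₀₁ t ht, h₂₀, h₂₁] <;>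
    ring

end IsFlatLift

/-- The curve `ch` is, on `I`, a light-cone lift of a `lam`-Darboux transform of the flat lift `c`
with polarization `dt ^ 2 / t ^ 2`, namely a parallel section of `d/dt + (lam / t ^ 2) c ∧ c'`. -/
structure IsDarbouxLift (lam : ℝ) (c ch : ℝ → E n) (I : Set ℝ) : Prop where
  ne_zero : ∀ t ∈ I, ch t ≠ 0
  null : ∀ t ∈ I, mink (ch t) (ch t) = 0
  hasDerivAt : ∀ t ∈ I, HasDerivAt ch
    (-(lam / t ^ 2) • (mink (c t) (ch t) • deriv c t - mink (deriv c t) (ch t) • c t)) t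

namespace IsDarbouxLift

variable {lam : ℝ} {c ch : ℝ → E n} {s I J : Set ℝ}

lemma mono (h : IsDarbouxLift lam c ch I) (hJ : J ⊆ I) : IsDarbouxLift lam c ch J :=
  ⟨fun t ht ↦ h.ne_zero t (hJ ht), fun t ht ↦ h.null t (hJ ht), fun t ht ↦ h.hasDerivAt t (hJ ht)⟩

lemma neg (h : IsDarbouxLift lam c ch I) : IsDarbouxLift lam c (-ch) I := by
  refine ⟨fun t ht ↦ neg_ne_zero.2 (h.ne_zero t ht), fun t ht ↦ ?_, fun t ht ↦ ?_⟩
  · rw [Pi.neg_apply, mink_neg_right, mink_comm, mink_neg_right, h.null t ht, neg_zero, neg_zero]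
  · refine (h.hasDerivAt t ht).neg.congr_deriv ?_
    simp only [Pi.neg_apply, mink_neg_right]
    module

section Frame

variable {t : ℝ}

lemma hasDerivAt_mink_lift (h : IsDarbouxLift lam c ch I) (hc : IsFlatLift c s) (hs : IsOpen s)
    (ht : t ∈ s) (htI : t ∈ I) :
    HasDerivAt (fun t ↦ mink (c t) (ch t)) (mink (deriv c t) (ch t)) t := by
  have hframe := hc.isNullFrame hs ht
  refine (hasDerivAt_mink (hc.hasDerivAt hs ht) (h.hasDerivAt t htI)).congr_deriv ?_
  simp only [mink_smul_right, mink_sub_right, hframe.left_self, hframe.left_middle]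
  ring

lemma hasDerivAt_mink_deriv (h : IsDarbouxLift lam c ch I) (hc : IsFlatLift c s) (hs : IsOpen s)
    (ht : t ∈ s) (htI : t ∈ I) :
    HasDerivAt (fun t ↦ mink (deriv c t) (ch t)) (mink (nullNormal c t) (ch t) -
      lightConeCurvature c t * mink (c t) (ch t) - lam / t ^ 2 * mink (c t) (ch t)) t := by
  have hframe := hc.isNullFrame hs ht
  refine (hasDerivAt_mink (hc.hasDerivAt_deriv hs ht) (h.hasDerivAt t htI)).congr_deriv ?_
  simp only [nullNormal, mink_add_left, mink_smul_left, mink_smul_right, mink_sub_right,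
    mink_comm (deriv c t) (c t), hframe.left_middle, hframe.middle_self]
  ring

lemma hasDerivAt_mink_nullNormal (h : IsDarbouxLift lam c ch I) (hc : IsFlatLift c s)
    (hs : IsOpen s) (ht : t ∈ s) (htI : t ∈ I) :
    HasDerivAt (fun t ↦ mink (nullNormal c t) (ch t))
      (mink (deriv (nullNormal c) t) (ch t) - lam / t ^ 2 * mink (deriv c t) (ch t)) t := by
  have hframe := hc.isNullFrame hs ht
  refine (hasDerivAt_mink (hc.hasDerivAt_nullNormal hs ht) (h.hasDerivAt t htI)).congr_deriv ?_
  simp only [mink_smul_right, mink_sub_right, hframe.right_left, hframe.right_middle]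
  ring

lemma mink_add_mink_nullNormal_ne_zero (h : IsDarbouxLift lam c ch I) (hc : IsFlatLift c s)
    (hs : IsOpen s) (ht : t ∈ s) (htI : t ∈ I) :
    mink (c t) (ch t) + mink (nullNormal c t) (ch t) ≠ 0 := by
  intro h₀
  have hnorm := (hc.isNullFrame hs ht).norm_le_of_null (h.null t htI)
  rw [h₀, abs_zero, mul_zero] at hnorm
  exact h.ne_zero t htI (norm_le_zero_iff.1 hnorm)

end Frame

section Convergence

variable {τ : ℝ}

lemma forall_pos_or_forall_neg (h : IsDarbouxLift lam c ch (Ioo 0 τ)) (hc : IsFlatLift c s)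
    (hs : IsOpen s) (hsub : Ioo 0 τ ⊆ s) :
    (∀ t ∈ Ioo 0 τ, 0 < mink (c t) (ch t) + mink (nullNormal c t) (ch t)) ∨
      ∀ t ∈ Ioo 0 τ, mink (c t) (ch t) + mink (nullNormal c t) (ch t) < 0 :=
  isPreconnected_Ioo.mapsTo_Ioi_or_Iio
    (HasDerivAt.continuousOn fun _ ht ↦ (h.hasDerivAt_mink_lift hc hs (hsub ht) ht).add
      (h.hasDerivAt_mink_nullNormal hc hs (hsub ht) ht))
    fun _ ht ↦ h.mink_add_mink_nullNormal_ne_zero hc hs (hsub ht) ht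

lemma inLightCone (h : IsDarbouxLift lam c ch I) (hc : IsFlatLift c s) (hs : IsOpen s) {t : ℝ}
    (ht : t ∈ s) (htI : t ∈ I) (hpos : 0 < mink (c t) (ch t) + mink (nullNormal c t) (ch t)) :
    InLightCone (mink (c t) (ch t)) (mink (deriv c t) (ch t)) (mink (nullNormal c t) (ch t)) :=
  (hc.isNullFrame hs ht).inLightCone_of_null (h.null t htI) hpos

lemma isDarbouxSystem {C : ℝ} (h : IsDarbouxLift lam c ch (Ioo 0 τ)) (hc : IsFlatLift c s)
    (hs : IsOpen s) (hsub : Ioo 0 τ ⊆ s) (hτ : τ ≤ 1)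
    (hpos : ∀ t ∈ Ioo 0 τ, 0 < mink (c t) (ch t) + mink (nullNormal c t) (ch t))
    (hκ : ∀ t ∈ Ioo 0 τ, |lightConeCurvature c t| ≤ C)
    (hN : ∀ t ∈ Ioo 0 τ, ‖deriv (nullNormal c) t‖ * ‖c t + nullNormal c t‖ ≤ C) :
    IsDarbouxSystem lam C τ (fun t ↦ mink (c t) (ch t) / t) (fun t ↦ mink (deriv c t) (ch t))
      (fun t ↦ t * mink (nullNormal c t) (ch t))
      (fun t ↦ -(lightConeCurvature c t * mink (c t) (ch t)))
      (fun t ↦ t * mink (deriv (nullNormal c) t) (ch t)) := by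
  have hcone t (ht : t ∈ Ioo 0 τ) := h.inLightCone hc hs (hsub ht) ht (hpos t ht)
  have hle : ∀ t ∈ Ioo 0 τ, mink (c t) (ch t) ≤ mink (c t) (ch t) / t := fun t ht ↦
    le_div_self (hcone t ht).left_nonneg ht.1 (ht.2.le.trans hτ)
  have hsum : ∀ t ∈ Ioo 0 τ, t * (mink (c t) (ch t) + mink (nullNormal c t) (ch t)) ≤
      mink (c t) (ch t) / t + t * mink (nullNormal c t) (ch t) := fun t ht ↦ by
    linarith [hle t ht, mul_le_of_le_one_left (hcone t ht).left_nonneg (ht.2.le.trans hτ)]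
  constructor <;> intro t ht <;> have ht₀ := ht.1
  · exact (hcone t ht).rescale ht₀
  · exact (mul_pos ht₀ (hpos t ht)).trans_le (hsum t ht)
  · refine ((h.hasDerivAt_mink_lift hc hs (hsub ht) ht).div (hasDerivAt_id t)
      ht₀.ne').congr_deriv ?_
    simp only [id]
    field_simp
  · refine (h.hasDerivAt_mink_deriv hc hs (hsub ht) ht).congr_deriv ?_
    field_simp
    ring
  · refine ((hasDerivAt_id t).mul
      (h.hasDerivAt_mink_nullNormal hc hs (hsub ht) ht)).congr_deriv ?_
    simp only [id]
    field_simp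
    ring
  · rw [abs_neg, abs_mul, abs_of_nonneg (hcone t ht).left_nonneg]
    refine mul_le_mul (hκ t ht) ?_ (hcone t ht).left_nonneg ((abs_nonneg _).trans (hκ t ht))
    exact (hle t ht).trans
      (le_add_of_nonneg_right (mul_nonneg ht₀.le (hcone t ht).right_nonneg))
  · have hbound := (hc.isNullFrame hs (hsub ht)).abs_mink_le_of_null (h.null t ht)
      (deriv (nullNormal c) t)
    rw [abs_of_pos (hpos t ht)] at hbound
    rw [abs_mul, abs_of_pos ht₀]
    calc t * |mink (deriv (nullNormal c) t) (ch t)|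
        ≤ t * (‖deriv (nullNormal c) t‖ * ‖c t + nullNormal c t‖ *
          (mink (c t) (ch t) + mink (nullNormal c t) (ch t))) := by gcongr
      _ = ‖deriv (nullNormal c) t‖ * ‖c t + nullNormal c t‖ *
          (t * (mink (c t) (ch t) + mink (nullNormal c t) (ch t))) := by ring
      _ ≤ C * (mink (c t) (ch t) / t + t * mink (nullNormal c t) (ch t)) :=
        mul_le_mul (hN t ht) (hsum t ht) (mul_pos ht₀ (hpos t ht)).le
          (le_trans (by positivity) (hN t ht))

lemma exists_eventually_mul_le (h : IsDarbouxLift lam c ch (Ioo 0 τ)) (hc : IsFlatLift c s)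
    (hs : IsOpen s) (h₀ : 0 ∈ s) (hsub : Ioo 0 τ ⊆ s) (hτ : 0 < τ)
    (hpos : ∀ t ∈ Ioo 0 τ, 0 < mink (c t) (ch t) + mink (nullNormal c t) (ch t))
    (hlam₀ : lam ≠ 0) (hlam : 2 * lam ≤ 1) :
    ∃ δ > 0, ∀ᶠ t in 𝓝[>] 0, δ * mink (c t) (ch t) ≤ t ^ 2 * mink (nullNormal c t) (ch t) := by
  set B := fun t ↦
    max |lightConeCurvature c t| (‖deriv (nullNormal c) t‖ * ‖c t + nullNormal c t‖)
  have hB : ContinuousAt B 0 := by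
    have hκ := (hc.contDiffOn_lightConeCurvature hs).continuousOn.continuousAt (hs.mem_nhds h₀)
    have hN := ((hc.contDiffOn_nullNormal hs).continuousOn_deriv_of_isOpen hs
      le_rfl).continuousAt (hs.mem_nhds h₀)
    exact hκ.abs.max (hN.norm.mul ((hc.hasDerivAt hs h₀).continuousAt.add
      (hc.hasDerivAt_nullNormal hs h₀).continuousAt).norm)
  have hev : ∀ᶠ t in 𝓝[>] 0, B t ≤ B 0 + 1 :=
    nhdsWithin_le_nhds (hB.eventually (ge_mem_nhds (lt_add_one _)))
  obtain ⟨ρ, hρ, hBρ⟩ := exists_forall_mem_Ioo_of_eventually_nhdsGT (lt_min hτ one_pos) hev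
  have hρτ : Ioo 0 ρ ⊆ Ioo 0 τ := Ioo_subset_Ioo_right (hρ.2.trans (min_le_left _ _))
  have hsys := (h.mono hρτ).isDarbouxSystem hc hs (hρτ.trans hsub)
    (hρ.2.trans (min_le_right _ _)) (fun t ht ↦ hpos t (hρτ ht))
    (fun t ht ↦ (le_max_left _ _).trans (hBρ t ht))
    (fun t ht ↦ (le_max_right _ _).trans (hBρ t ht))
  obtain ⟨δ, hδ, hle⟩ := hsys.exists_eventually_mul_left_le_right hρ.1 hlam₀ hlam
  refine ⟨δ, hδ, ?_⟩
  filter_upwards [hle, self_mem_nhdsWithin] with t ht (ht₀ : 0 < t)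
  rw [← mul_div_assoc, div_le_iff₀ ht₀] at ht
  linarith

lemma tendsto_mink_lift_div_mink_nullNormal (h : IsDarbouxLift lam c ch (Ioo 0 τ))
    (hc : IsFlatLift c s) (hs : IsOpen s) (h₀ : 0 ∈ s) (hsub : Ioo 0 τ ⊆ s) (hτ : 0 < τ)
    (hpos : ∀ t ∈ Ioo 0 τ, 0 < mink (c t) (ch t) + mink (nullNormal c t) (ch t))
    (hlam₀ : lam ≠ 0) (hlam : 2 * lam ≤ 1) :
    (∀ᶠ t in 𝓝[>] 0, mink (nullNormal c t) (ch t) ≠ 0) ∧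
      Tendsto (fun t ↦ mink (c t) (ch t) / mink (nullNormal c t) (ch t)) (𝓝[>] 0) (𝓝 0) := by
  obtain ⟨δ, hδ, hle⟩ := h.exists_eventually_mul_le hc hs h₀ hsub hτ hpos hlam₀ hlam
  have hcone : ∀ᶠ t in 𝓝[>] 0, 0 ≤ mink (c t) (ch t) ∧ 0 < mink (nullNormal c t) (ch t) := by
    filter_upwards [Ioo_mem_nhdsGT hτ, hle] with t ht hlet
    have hx := (h.inLightCone hc hs (hsub ht) ht (hpos t ht)).left_nonneg
    refine ⟨hx, lt_of_not_ge fun hz ↦ ?_⟩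
    have : mink (c t) (ch t) ≤ 0 := nonpos_of_mul_nonpos_right
      (hlet.trans (mul_nonpos_of_nonneg_of_nonpos (sq_nonneg t) hz)) hδ
    linarith [hpos t ht]
  have hlim : Tendsto (fun t : ℝ ↦ t ^ 2 / δ) (𝓝[>] 0) (𝓝 0) := by
    have : Continuous fun t : ℝ ↦ t ^ 2 / δ := by fun_prop
    simpa using (this.tendsto 0).mono_left nhdsWithin_le_nhds
  refine ⟨hcone.mono fun t ht ↦ ht.2.ne',
    tendsto_of_tendsto_of_tendsto_of_le_of_le' tendsto_const_nhds hlim ?_ ?_⟩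
  · filter_upwards [hcone] with t ht using div_nonneg ht.1 ht.2.le
  · filter_upwards [hcone, hle] with t ht hlet
    rw [div_le_div_iff₀ ht.2 hδ]
    linarith

-- The difference of the normalized transform and `c` has square `2 x / z` and pairing `-x / z`
-- with the timelike vector `c + N`.
lemma tendsto_neg_inv_smul (h : IsDarbouxLift lam c ch (Ioo 0 τ)) (hc : IsFlatLift c s)
    (hs : IsOpen s) (h₀ : 0 ∈ s) (hsub : Ioo 0 τ ⊆ s) (hτ : 0 < τ)
    (hz : ∀ᶠ t in 𝓝[>] 0, mink (nullNormal c t) (ch t) ≠ 0)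
    (hlim : Tendsto (fun t ↦ mink (c t) (ch t) / mink (nullNormal c t) (ch t)) (𝓝[>] 0) (𝓝 0)) :
    Tendsto (fun t ↦ -(mink (nullNormal c t) (ch t))⁻¹ • ch t) (𝓝[>] 0) (𝓝 (c 0)) := by
  have hc₀ : Tendsto c (𝓝[>] 0) (𝓝 (c 0)) :=
    (hc.hasDerivAt hs h₀).continuousAt.tendsto.mono_left nhdsWithin_le_nhds
  have hN₀ : Tendsto (nullNormal c) (𝓝[>] 0) (𝓝 (nullNormal c 0)) :=
    (hc.hasDerivAt_nullNormal hs h₀).continuousAt.tendsto.mono_left nhdsWithin_le_nhds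
  have hev : ∀ᶠ t in 𝓝[>] 0, t ∈ Ioo 0 τ := Ioo_mem_nhdsGT hτ
  have hdiff : Tendsto (fun t ↦ -(mink (nullNormal c t) (ch t))⁻¹ • ch t - c t)
      (𝓝[>] 0) (𝓝 0) := by
    refine tendsto_zero_of_tendsto_mink (hc₀.add hN₀) (hc.isNullFrame hs h₀).mink_add_self_neg ?_ ?_
    · have hlim' := hlim.neg
      rw [neg_zero] at hlim'
      refine hlim'.congr' ?_
      filter_upwards [hev, hz] with t ht hzt
      have hframe := hc.isNullFrame hs (hsub ht)
      simp only [mink_add_left, mink_sub_right, mink_smul_right, hframe.left_self,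
        hframe.right_left]
      field_simp
      ring
    · have hlim' := hlim.const_mul 2
      rw [mul_zero] at hlim'
      refine hlim'.congr' ?_
      filter_upwards [hev, hz] with t ht hzt
      simp only [mink_sub_left, mink_sub_right, mink_smul_left, mink_smul_right,
        mink_comm (ch t) (c t), h.null t ht, (hc.isNullFrame hs (hsub ht)).left_self]
      field_simp
      ring
  simpa only [sub_add_cancel, zero_add] using hdiff.add hc₀

lemma exists_tendsto_smul_of_pos (h : IsDarbouxLift lam c ch (Ioo 0 τ)) (hc : IsFlatLift c s)
    (hs : IsOpen s) (h₀ : 0 ∈ s) (hsub : Ioo 0 τ ⊆ s) (hτ : 0 < τ)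
    (hpos : ∀ t ∈ Ioo 0 τ, 0 < mink (c t) (ch t) + mink (nullNormal c t) (ch t))
    (hlam₀ : lam ≠ 0) (hlam : 2 * lam ≤ 1) :
    ∃ r : ℝ → ℝ, (∀ t, r t ≠ 0) ∧ Tendsto (fun t ↦ r t • ch t) (𝓝[>] 0) (𝓝 (c 0)) := by
  obtain ⟨hz, hlim⟩ := h.tendsto_mink_lift_div_mink_nullNormal hc hs h₀ hsub hτ hpos hlam₀ hlam
  refine ⟨fun t ↦ if mink (nullNormal c t) (ch t) = 0 then 1
    else -(mink (nullNormal c t) (ch t))⁻¹, fun t ↦ ?_, ?_⟩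
  · dsimp only
    split_ifs with hzt
    exacts [one_ne_zero, neg_ne_zero.2 (inv_ne_zero hzt)]
  · refine (h.tendsto_neg_inv_smul hc hs h₀ hsub hτ hz hlim).congr' ?_
    filter_upwards [hz] with t hzt
    rw [if_neg hzt]

end Convergence

end IsDarbouxLift

theorem stmt14_general {s : Set ℝ} {b lam : ℝ} {c ch : ℝ → E n} (hs : IsOpen s) (h₀ : 0 ∈ s)
    (hc : IsFlatLift c s) (hb : 0 < b) (hlam₀ : lam ≠ 0) (hlam : 2 * lam ≤ 1)
    (hch : IsDarbouxLift lam c ch (Ioo 0 b)) :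
    ∃ r : ℝ → ℝ, (∀ t, r t ≠ 0) ∧ Tendsto (fun t ↦ r t • ch t) (𝓝[>] 0) (𝓝 (c 0)) := by
  have hnhds : ∀ᶠ t in 𝓝[>] 0, t ∈ s := nhdsWithin_le_nhds (hs.mem_nhds h₀)
  obtain ⟨τ, hτ, hsub⟩ := exists_forall_mem_Ioo_of_eventually_nhdsGT hb hnhds
  have h := hch.mono (Ioo_subset_Ioo_right hτ.2)
  rcases h.forall_pos_or_forall_neg hc hs hsub with hpos | hneg
  · exact h.exists_tendsto_smul_of_pos hc hs h₀ hsub hτ.1 hpos hlam₀ hlam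
  · obtain ⟨r, hr, hlim⟩ := h.neg.exists_tendsto_smul_of_pos hc hs h₀ hsub hτ.1
      (fun t ht ↦ by simpa only [Pi.neg_apply, mink_neg_right, ← neg_add, neg_pos] using hneg t ht)
      hlam₀ hlam
    refine ⟨-r, fun t ↦ neg_ne_zero.2 (hr t), ?_⟩
    simpa only [Pi.neg_apply, smul_neg, neg_smul] using hlim

/-- Theorem 5.2: at a second-order pole, every λ-Darboux transform with
1−2λ ≥ 0, λ ≠ 0, converges to the original curve. -/
theorem stmt14 {n : ℕ} (ε b : ℝ) (hε : 0 < ε) (hb : 0 < b)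
    (c : ℝ → E n) (hc : ContDiffOn ℝ (⊤ : ℕ∞) c (Set.Ioo (-ε) b))
    (hcnull : ∀ t ∈ Set.Ioo (-ε) b, mink (c t) (c t) = 0)
    (hcne : ∀ t ∈ Set.Ioo (-ε) b, c t ≠ 0)
    (hcreg : ∀ t ∈ Set.Ioo (-ε) b, mink (deriv c t) (deriv c t) = 1)
    (lam : ℝ) (hlam : lam ≠ 0) (hlam2 : 2 * lam ≤ 1)
    (ch : ℝ → E n)
    (hchne : ∀ t ∈ Set.Ioo (0:ℝ) b, ch t ≠ 0)
    (hchnull : ∀ t ∈ Set.Ioo (0:ℝ) b, mink (ch t) (ch t) = 0)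
    (hch : ∀ t ∈ Set.Ioo (0:ℝ) b, HasDerivAt ch
      ((-(lam / t ^ 2)) •
        (mink (c t) (ch t) • deriv c t - mink (deriv c t) (ch t) • c t)) t) :
    ∃ r : ℝ → ℝ, (∀ t ∈ Set.Ioo (0:ℝ) b, r t ≠ 0) ∧
      Tendsto (fun t : ℝ => r t • ch t) (𝓝[>] 0) (𝓝 (c 0)) :=
  let ⟨r, hr, hlim⟩ := stmt14_general isOpen_Ioo ⟨neg_lt_zero.2 hε, hb⟩
    ⟨contDiffOn_infty.1 hc 3, hcnull, hcreg⟩ hb hlam hlam2 ⟨hchne, hchnull, hch⟩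
  ⟨r, fun t _ ↦ hr t, hlim⟩
end
end
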